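/- arXiv:0904.3379 — 11 statements merged into one kernel-verified Lean document; each statement's English description precedes it below -/
import Mathlib

section
/- Let n ≥ 1 and N > j ≥ 0 be integers. Then ∑_{i=0}^{N−j−1} (−1)^i · binom(N+i+j+n/2, N−j) · binom(n/2+2j+i, i) / [ (i+j+n/2+1/2) · (N−j−i−1)! · ∏_{k=0}^{i+1} (n/2+2j+k) ] = 2 · binom(N+1/2, N−j) / ( (2N+1)(2j+n/2) ) · Γ(n/2+j+1/2) / Γ(n/2+N+1/2). -/
/-! With `m = N - j - 1`, `a = x + 2 * j` and `c = x + j + 1 / 2` (where `x = n / 2`), the factors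
of the `i`-th summand that involve `a` collapse to the rising factorial `(a + 2 + i)_m`, up to a
constant and a factor `1 / i!`. The sum is then the partial fraction decomposition, in the variable
`c`, of `(a + 2 - c)_m / (c (c + 1) ⋯ (c + m))`, which is Lagrange interpolation at the nodes
`0, -1, …, -m`. On the right, `a + 2 - c = j + 3 / 2` gives the binomial coefficient and the
denominator gives the quotient of Gamma values. -/

open Finset

/-- Generalized binomial coefficient `binom(x, k) = x(x-1)⋯(x-k+1)/k!` for real `x`. -/
noncomputable def rbinom (x : ℝ) (k : ℕ) : ℝ :=
  (∏ i ∈ Finset.range k, (x - i)) / (Nat.factorial k : ℝ)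

section RisingFactorial

variable {R : Type*} [CommSemiring R]

theorem ascPochhammer_eval_eq_prod_range (n : ℕ) (r : R) :
    (ascPochhammer R n).eval r = ∏ k ∈ range n, (r + k) := by
  induction n with
  | zero => simp
  | succ n ih => rw [ascPochhammer_succ_eval, ih, prod_range_succ]

theorem ascPochhammer_succ_eval_left (n : ℕ) (r : R) :
    (ascPochhammer R (n + 1)).eval r = r * (ascPochhammer R n).eval (r + 1) := by
  simp [ascPochhammer_succ_left]

end RisingFactorial

theorem gamma_add_natCast {x : ℝ} {n : ℕ} (hx : ∀ k < n, x + k ≠ 0) :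
    Real.Gamma (x + n) = (ascPochhammer ℝ n).eval x * Real.Gamma x := by
  induction n with
  | zero => simp
  | succ n ih =>
    rw [Nat.cast_succ, ← add_assoc, Real.Gamma_add_one (hx n n.lt_succ_self),
      ih fun k hk => hx k (hk.trans n.lt_succ_self), ascPochhammer_succ_eval]
    ring

theorem rbinom_add_natCast (x : ℝ) (k : ℕ) :
    rbinom (x + k) k = (ascPochhammer ℝ k).eval (x + 1) / (k.factorial : ℝ) := by
  rw [rbinom, ← descPochhammer_eval_eq_prod_range, descPochhammer_eval_eq_ascPochhammer,
    add_sub_cancel_right]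

theorem rbinom_add_natCast_succ (x : ℝ) (k : ℕ) :
    rbinom (x + (k + 1 : ℕ)) (k + 1)
      = (x + k + 1) * (ascPochhammer ℝ k).eval (x + 1) / ((k + 1).factorial : ℝ) := by
  rw [rbinom_add_natCast, ascPochhammer_succ_eval]
  ring

section PartialFractions

open Polynomial

theorem prod_erase_range_add_succ {M : Type*} [CommMonoid M] (f : ℕ → M) (i d : ℕ) :
    ∏ k ∈ (range (i + d + 1)).erase i, f k
      = (∏ k ∈ range i, f k) * ∏ k ∈ range d, f (i + 1 + k) := by
  induction d with
  | zero => simp [range_add_one]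
  | succ d ih =>
    rw [← add_assoc, range_add_one (n := i + d + 1), erase_insert_of_ne (by lia),
      prod_insert (by simp), ih, prod_range_succ, mul_left_comm, mul_comm (f _)]
    congr 3
    ring

variable {K : Type*} [Field K] [CharZero K]

theorem nodalWeight_range_neg_natCast {m i : ℕ} (hi : i ≤ m) :
    Lagrange.nodalWeight (range (m + 1)) (fun k => -(k : K)) i
      = (-1) ^ i * (m.choose i : K) / (m.factorial : K) := by
  obtain ⟨d, rfl⟩ := Nat.exists_eq_add_of_le hi
  have hbelow : ∏ k ∈ range i, (-(i : K) - -k) = (-1) ^ i * (i.factorial : K) := by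
    simp only [sub_neg_eq_add]
    rw [← ascPochhammer_eval_eq_prod_range, ascPochhammer_eval_neg_eq_descPochhammer,
      descPochhammer_eval_eq_descFactorial, Nat.descFactorial_self]
  have habove : ∏ k ∈ range d, (-(i : K) - -((i + 1 + k : ℕ) : K)) = (d.factorial : K) := by
    rw [← ascPochhammer_eval_one, ascPochhammer_eval_eq_prod_range]
    exact prod_congr rfl fun k _ => by push_cast; ring
  rw [Lagrange.nodalWeight, prod_inv_distrib, prod_erase_range_add_succ, hbelow, habove,
    Nat.cast_add_choose]
  have hsign : ((-1 : K) ^ i) ^ 2 = 1 := by rw [← pow_mul, mul_comm, pow_mul]; simp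
  field_simp [Nat.factorial_ne_zero]
  exact hsign.symm

theorem sum_alternating_choose_mul_eval_neg_div (Q : K[X]) {m : ℕ} (hQ : Q.natDegree ≤ m) {c : K}
    (hc : ∀ k ≤ m, c + k ≠ 0) :
    ∑ i ∈ range (m + 1), (-1) ^ i * (m.choose i : K) * (Q.eval (-(i : K)) / (c + i))
      = (m.factorial : K) * Q.eval c / (ascPochhammer K (m + 1)).eval c := by
  have hinj : Set.InjOn (fun k : ℕ => -(k : K)) (range (m + 1)) :=
    (neg_injective.comp Nat.cast_injective).injOn
  have hdeg : Q.degree < #(range (m + 1)) := by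
    rw [card_range]
    exact degree_le_natDegree.trans_lt (by exact_mod_cast Nat.lt_succ_of_le hQ)
  have hnode : ∀ i ∈ range (m + 1), c ≠ -(i : K) := fun i hi h =>
    hc i (mem_range_succ_iff.mp hi) (eq_neg_iff_add_eq_zero.mp h)
  have hnodal : (Lagrange.nodal (range (m + 1)) fun k : ℕ => -(k : K)).eval c
      = (ascPochhammer K (m + 1)).eval c := by
    simp only [Lagrange.eval_nodal, sub_neg_eq_add, ascPochhammer_eval_eq_prod_range]
  have hpoch : (ascPochhammer K (m + 1)).eval c ≠ 0 :=
    hnodal ▸ Lagrange.eval_nodal_not_at_node hnode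
  have hlagrange := Lagrange.eval_interpolate_not_at_node
    (fun k : ℕ => Q.eval (-(k : K))) hnode
  rw [← Lagrange.eq_interpolate hinj hdeg, hnodal] at hlagrange
  rw [hlagrange, mul_left_comm, mul_div_cancel_left₀ _ hpoch, mul_sum]
  refine sum_congr rfl fun i hi => ?_
  rw [nodalWeight_range_neg_natCast (mem_range_succ_iff.mp hi), sub_neg_eq_add]
  field_simp [Nat.factorial_ne_zero]

theorem sum_alternating_choose_mul_ascPochhammer_div (m : ℕ) (b : K) {c : K}
    (hc : ∀ k ≤ m, c + k ≠ 0) :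
    ∑ i ∈ range (m + 1),
        (-1) ^ i * (m.choose i : K) * ((ascPochhammer K m).eval (b + i) / (c + i))
      = (m.factorial : K) * (ascPochhammer K m).eval (b - c)
          / (ascPochhammer K (m + 1)).eval c := by
  have hdeg : ((ascPochhammer K m).comp (C b - X)).natDegree ≤ m := by
    rw [natDegree_comp, ascPochhammer_natDegree, natDegree_sub, natDegree_X_sub_C, mul_one]
  simpa using sum_alternating_choose_mul_eval_neg_div _ hdeg hc

end PartialFractions

theorem rbinom_mul_rbinom_div_prod {a : ℝ} (m : ℕ) {i : ℕ} (ha : ∀ k ≤ i + 1, a + k ≠ 0) :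
    rbinom (a + i + (m + 1 : ℕ)) (m + 1) * rbinom (a + i) i / ∏ k ∈ range (i + 2), (a + k)
      = (ascPochhammer ℝ m).eval (a + 2 + i)
          / (a * ((m + 1).factorial : ℝ) * (i.factorial : ℝ)) := by
  have hprod : ∏ k ∈ range (i + 2), (a + k)
      = a * (ascPochhammer ℝ i).eval (a + 1) * (a + i + 1) := by
    rw [← ascPochhammer_eval_eq_prod_range, ascPochhammer_succ_eval, ascPochhammer_succ_eval_left]
    push_cast
    ring
  have hne : a * (ascPochhammer ℝ i).eval (a + 1) * (a + i + 1) ≠ 0 :=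
    hprod ▸ prod_ne_zero_iff.mpr fun k hk => ha k (mem_range_succ_iff.mp hk)
  rw [hprod, rbinom_add_natCast, rbinom_add_natCast, ascPochhammer_succ_eval_left,
    show a + i + 1 + 1 = a + 2 + i by ring]
  simp only [mul_ne_zero_iff] at hne
  obtain ⟨⟨ha₀, hpoch⟩, hlast⟩ := hne
  field_simp

theorem sum_rbinom_mul_rbinom_div {a c : ℝ} {m : ℕ} (ha : ∀ k ≤ m + 1, a + k ≠ 0)
    (hc : ∀ k ≤ m, c + k ≠ 0) :
    ∑ i ∈ range (m + 1),
        (-1 : ℝ) ^ i * rbinom (a + i + (m + 1 : ℕ)) (m + 1) * rbinom (a + i) i /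
          ((c + i) * ((m - i).factorial : ℝ) * ∏ k ∈ range (i + 2), (a + k))
      = (ascPochhammer ℝ m).eval (a + 2 - c)
          / (a * ((m + 1).factorial : ℝ) * (ascPochhammer ℝ (m + 1)).eval c) := by
  have hterm : ∀ i ∈ range (m + 1),
      (-1 : ℝ) ^ i * rbinom (a + i + (m + 1 : ℕ)) (m + 1) * rbinom (a + i) i /
          ((c + i) * ((m - i).factorial : ℝ) * ∏ k ∈ range (i + 2), (a + k))
        = (-1) ^ i * (m.choose i : ℝ) * ((ascPochhammer ℝ m).eval (a + 2 + i) / (c + i))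
            / (a * ((m + 1).factorial : ℝ) * (m.factorial : ℝ)) := by
    intro i hi
    have him : i ≤ m := mem_range_succ_iff.mp hi
    rw [mul_assoc, mul_div_mul_comm, rbinom_mul_rbinom_div_prod m fun k hk => ha k (by lia),
      Nat.cast_choose ℝ him]
    field_simp
  rw [sum_congr rfl hterm, ← sum_div, sum_alternating_choose_mul_ascPochhammer_div m (a + 2) hc]
  field_simp

theorem stmt0_general {x : ℝ} {N j : ℕ} (hj : j < N) (hx : ∀ k ≤ N - j, x + 2 * j + k ≠ 0)
    (hΓ : ∀ k : ℕ, x + j + 1 / 2 + k ≠ 0) :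
    ∑ i ∈ range (N - j),
        (-1 : ℝ) ^ i * rbinom ((N : ℝ) + i + j + x) (N - j) * rbinom (x + 2 * j + i) i /
        (((i : ℝ) + j + x + 1 / 2) * ((N - j - i - 1).factorial : ℝ)
          * ∏ k ∈ range (i + 2), (x + 2 * j + k))
      = 2 * rbinom ((N : ℝ) + 1 / 2) (N - j) / ((2 * (N : ℝ) + 1) * (2 * (j : ℝ) + x))
          * (Real.Gamma (x + j + 1 / 2) / Real.Gamma (x + N + 1 / 2)) := by
  obtain ⟨m, rfl⟩ := Nat.exists_eq_add_of_lt hj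
  have hm : j + m + 1 - j = m + 1 := by lia
  rw [hm] at hx ⊢
  have hΓ₀ : Real.Gamma (x + j + 1 / 2) ≠ 0 :=
    Real.Gamma_ne_zero fun k h => hΓ k (eq_neg_iff_add_eq_zero.mp h)
  have hgamma : Real.Gamma (x + j + 1 / 2) / Real.Gamma (x + (j + m + 1 : ℕ) + 1 / 2)
      = ((ascPochhammer ℝ (m + 1)).eval (x + j + 1 / 2))⁻¹ := by
    rw [← div_mul_cancel_right₀ hΓ₀, ← gamma_add_natCast fun k _ => hΓ k]
    push_cast
    ring_nf
  have hrbinom : rbinom ((j + m + 1 : ℕ) + 1 / 2) (m + 1) = (j + 1 / 2 + m + 1)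
      * (ascPochhammer ℝ m).eval ((j : ℝ) + 1 / 2 + 1) / ((m + 1).factorial : ℝ) := by
    rw [← rbinom_add_natCast_succ]
    push_cast
    ring_nf
  calc
    _ = (ascPochhammer ℝ m).eval (x + 2 * j + 2 - (x + j + 1 / 2)) / ((x + 2 * j)
          * ((m + 1).factorial : ℝ) * (ascPochhammer ℝ (m + 1)).eval (x + j + 1 / 2)) := by
      rw [← sum_rbinom_mul_rbinom_div hx fun k _ => hΓ k]
      refine sum_congr rfl fun i _ => ?_
      rw [show m + 1 - i - 1 = m - i by lia]
      push_cast
      ring_nf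
    _ = _ := by
      rw [hgamma, hrbinom, show x + 2 * j + 2 - (x + j + 1 / 2) = (j : ℝ) + 1 / 2 + 1 by ring]
      push_cast
      field_simp
      ring

theorem stmt0 (n N j : ℕ) (hn : 1 ≤ n) (hj : j < N) :
    ∑ i ∈ Finset.range (N - j),
        (-1 : ℝ) ^ i * rbinom ((N : ℝ) + i + j + n / 2) (N - j)
          * rbinom ((n : ℝ) / 2 + 2 * j + i) i /
        (((i : ℝ) + j + (n : ℝ) / 2 + 1 / 2) * ((N - j - i - 1).factorial : ℝ)
          * ∏ k ∈ Finset.range (i + 2), ((n : ℝ) / 2 + 2 * j + k))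
      = 2 * rbinom ((N : ℝ) + 1 / 2) (N - j) / ((2 * (N : ℝ) + 1) * (2 * (j : ℝ) + n / 2))
          * (Real.Gamma ((n : ℝ) / 2 + j + 1 / 2) / Real.Gamma ((n : ℝ) / 2 + N + 1 / 2)) := by
  have : (0 : ℝ) < n := by exact_mod_cast hn
  exact stmt0_general hj (fun k _ => by positivity) fun k => by positivity
end

section
/- Let n ≥ 1 be an integer and let N, p, j, i be integers with N−1 ≥ p ≥ j+i ≥ 0, j ≥ 0, i ≥ 0, and set m = p+1−i. Then ∑_{s=0}^{N−m} (−1)^s · binom(n/2+N+m+s−1, N−j) · binom(n/2+j+m+s−1, s) / [ (m+s+n/2−1/2) · (N−m−s)! · Γ(n/2+2m+i+s) ] = (N−m−i)! · (m+i−j)! · Γ(m+n/2−1/2) / [ (N−j)! · Γ(n/2+2m+i) · Γ(N+n/2+1/2) ] · binom(N−1/2, N−m−i) · binom(n/2+2m+i−1, m+i−j). -/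
open Finset

/-!
Write `(y)_k = y (y + 1) ⋯ (y + k - 1)`. Lagrange interpolation at the nodes `0, 1, …, M` expands
`P(-c) / (c)_{M + 1}` in partial fractions with denominators `c + s` for every polynomial `P` of
degree at most `M`. Put `a = n / 2`, `c = m + a - 1 / 2`, `M = N - m`, `x = a + j + m`,
`L = m + i - j` and `K = N - m - i`. Splitting `(x)_{s + L + K}` as `(x)_L (x + L)_s (x + L + s)_K`
and using `(x + L)_s / Γ(x + L + s) = 1 / Γ(x + L)`, one sees that the binomial coefficients and the
last Gamma factor of a summand depend on `s` only through `(x + L + s)_K / s!`. Hence the sum is the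
partial fraction expansion for `P(y) = (x + L + y)_K`, where `P(-c)` is the numerator of the
binomial coefficient with lower index `K` and `1 / (c)_{M + 1} = Γ(c) / Γ(c + M + 1)`.
-/

open Polynomial

section PartialFractions

lemma prod_range_erase_natCast_sub (R : Type*) [CommRing R] (s d : ℕ) :
    ∏ t ∈ (range (s + d + 1)).erase s, ((s : R) - t)
      = (-1) ^ d * (s.factorial : R) * (d.factorial : R) := by
  induction d with
  | zero =>
    have h_erase : (range (s + 0 + 1)).erase s = range s := by grind
    rw [h_erase, ← descPochhammer_eval_eq_prod_range, descPochhammer_eval_eq_descFactorial,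
      Nat.descFactorial_self]
    simp
  | succ d ih =>
    have h_erase : (range (s + (d + 1) + 1)).erase s
        = insert (s + d + 1) ((range (s + d + 1)).erase s) := by grind
    rw [h_erase, prod_insert (by simp), ih, Nat.factorial_succ]
    push_cast
    ring

variable {F : Type*} [Field F]

lemma nodalWeight_range_natCast {M s : ℕ} (hs : s ≤ M) :
    Lagrange.nodalWeight (range (M + 1)) (fun k : ℕ => (k : F)) s
      = (-1) ^ (M - s) / ((s.factorial : F) * ((M - s).factorial : F)) := by
  obtain ⟨d, rfl⟩ := Nat.exists_eq_add_of_le hs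
  rw [Lagrange.nodalWeight, prod_inv_distrib, prod_range_erase_natCast_sub,
    Nat.add_sub_cancel_left, mul_assoc, mul_inv, ← inv_pow, inv_neg_one, div_eq_mul_inv]

lemma sum_eval_div_eq_eval_neg_div_ascPochhammer [CharZero F] (P : F[X]) {M : ℕ}
    (hP : P.natDegree ≤ M) {c : F} (hc : ∀ k ∈ range (M + 1), c + k ≠ 0) :
    ∑ s ∈ range (M + 1), (-1) ^ s * P.eval (s : F) /
        ((c + s) * (s.factorial : F) * ((M - s).factorial : F))
      = P.eval (-c) / (ascPochhammer F (M + 1)).eval c := by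
  have h_deg : P.degree < #(range (M + 1)) := by
    rw [card_range]
    exact degree_le_natDegree.trans_lt (by exact_mod_cast Nat.lt_succ_of_le hP)
  have h_node : ∀ k ∈ range (M + 1), -c ≠ (k : F) := fun k hk h =>
    hc k hk (by rw [← h, add_neg_cancel])
  have h_nodal : (Lagrange.nodal (range (M + 1)) (fun k : ℕ => (k : F))).eval (-c)
      = (-1) ^ (M + 1) * (ascPochhammer F (M + 1)).eval c := by
    rw [Lagrange.eval_nodal, ← descPochhammer_eval_eq_prod_range,
      ← neg_neg c, ascPochhammer_eval_neg_eq_descPochhammer, neg_neg, ← mul_assoc, ← mul_pow,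
      neg_one_mul, neg_neg, one_pow, one_mul]
  have h_asc : (ascPochhammer F (M + 1)).eval c ≠ 0 := by
    rw [Ne, ascPochhammer_eval_eq_zero_iff]
    rintro ⟨k, hk, hkc⟩
    exact hc k (mem_range.mpr hk) (by rw [hkc, add_neg_cancel])
  have h_eval := congrArg (eval (-c)) (Lagrange.eq_interpolate Nat.cast_injective.injOn h_deg)
  rw [Lagrange.eval_interpolate_not_at_node _ h_node, h_nodal] at h_eval
  rw [h_eval, mul_right_comm, mul_div_cancel_right₀ _ h_asc, mul_sum]
  refine sum_congr rfl fun s hs => ?_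
  have hsM : s ≤ M := Nat.lt_succ_iff.mp (mem_range.mp hs)
  have h_sign : (-1 : F) ^ s = (-1) ^ M * (-1) ^ (M - s) := by
    rw [← pow_sub_mul_pow (-1 : F) hsM, mul_right_comm, ← mul_pow, neg_one_mul, neg_neg, one_pow,
      one_mul]
  have h_inv : (-c - (s : F))⁻¹ = -(c + s)⁻¹ := by rw [← inv_neg, neg_add']
  rw [nodalWeight_range_natCast hsM, h_sign, h_inv]
  simp only [div_eq_mul_inv, mul_inv]
  ring

end PartialFractions

lemma ascPochhammer_eval_add {S : Type*} [CommSemiring S] (k l : ℕ) (x : S) :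
    (ascPochhammer S (k + l)).eval x
      = (ascPochhammer S k).eval x * (ascPochhammer S l).eval (x + k) := by
  simp [← ascPochhammer_mul]

-- `Real.Gamma` is `0` at the poles of `Γ`, so `(Real.Gamma x)⁻¹` is the entire function `1 / Γ`.
lemma inv_Gamma_eq_ascPochhammer_eval_mul_inv_Gamma (x : ℝ) (k : ℕ) :
    (Real.Gamma x)⁻¹ = (ascPochhammer ℝ k).eval x * (Real.Gamma (x + k))⁻¹ := by
  induction k with
  | zero => simp
  | succ k ih =>
    have h_step (y : ℝ) : (Real.Gamma y)⁻¹ = y * (Real.Gamma (y + 1))⁻¹ := by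
      rcases eq_or_ne y 0 with rfl | hy
      · simp [Real.Gamma_zero]
      · rw [Real.Gamma_add_one hy, mul_inv, mul_inv_cancel_left₀ hy]
    rw [ih, h_step, ascPochhammer_succ_eval, mul_assoc, Nat.cast_succ, add_assoc]

lemma Gamma_div_Gamma_add_natCast {x : ℝ} (hx : ∀ k : ℕ, x ≠ -k) (k : ℕ) :
    Real.Gamma x / Real.Gamma (x + k) = ((ascPochhammer ℝ k).eval x)⁻¹ := by
  refine eq_inv_of_mul_eq_one_right ?_
  rw [div_eq_mul_inv, mul_left_comm, ← inv_Gamma_eq_ascPochhammer_eval_mul_inv_Gamma,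
    mul_inv_cancel₀ (Real.Gamma_ne_zero hx)]

lemma rbinom_add_sub_one (x : ℝ) (k : ℕ) :
    rbinom (x + k - 1) k = (ascPochhammer ℝ k).eval x / k.factorial := by
  rw [rbinom, ← descPochhammer_eval_eq_prod_range, descPochhammer_eval_eq_ascPochhammer]
  congr 2
  ring

lemma rbinom_mul_rbinom_div_Gamma (x : ℝ) (s L K : ℕ) :
    rbinom (x + s + (L + K : ℕ) - 1) (L + K) * rbinom (x + s - 1) s / Real.Gamma (x + L + s)
      = (ascPochhammer ℝ L).eval x / ((L + K).factorial * Real.Gamma (x + L))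
          * ((ascPochhammer ℝ K).eval (x + L + s) / s.factorial) := by
  have h_split : (ascPochhammer ℝ s).eval x * (ascPochhammer ℝ (L + K)).eval (x + s)
      = (ascPochhammer ℝ L).eval x * (ascPochhammer ℝ s).eval (x + L)
          * (ascPochhammer ℝ K).eval (x + L + s) := by
    rw [← ascPochhammer_eval_add, ← ascPochhammer_eval_add, add_assoc x, ← Nat.cast_add,
      ← ascPochhammer_eval_add, add_left_comm, add_assoc]
  rw [rbinom_add_sub_one, rbinom_add_sub_one]
  calc _ = (ascPochhammer ℝ s).eval x * (ascPochhammer ℝ (L + K)).eval (x + s)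
        / ((L + K).factorial * s.factorial) * (Real.Gamma (x + L + s))⁻¹ := by ring
    _ = (ascPochhammer ℝ L).eval x * (ascPochhammer ℝ K).eval (x + L + s)
        / ((L + K).factorial * s.factorial)
        * ((ascPochhammer ℝ s).eval (x + L) * (Real.Gamma (x + L + s))⁻¹) := by
      rw [h_split]; ring
    _ = _ := by
      rw [← inv_Gamma_eq_ascPochhammer_eval_mul_inv_Gamma]; ring

lemma sum_rbinom_mul_rbinom_div_Gamma (x : ℝ) {c : ℝ} (hc : ∀ k : ℕ, c ≠ -k) (L : ℕ) {K M : ℕ}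
    (hKM : K ≤ M) :
    ∑ s ∈ range (M + 1),
        (-1 : ℝ) ^ s * rbinom (x + s + (L + K : ℕ) - 1) (L + K) * rbinom (x + s - 1) s /
          ((c + s) * (M - s).factorial * Real.Gamma (x + L + s))
      = K.factorial * L.factorial * Real.Gamma c /
          ((L + K).factorial * Real.Gamma (x + L) * Real.Gamma (c + (M + 1 : ℕ)))
        * rbinom (x + L - c + K - 1) K * rbinom (x + L - 1) L := by
  let P : ℝ[X] := (ascPochhammer ℝ K).comp (X + C (x + L))
  have hP_deg : P.natDegree ≤ M := by
    rwa [natDegree_comp, ascPochhammer_natDegree, natDegree_X_add_C, mul_one]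
  have hP_eval (y : ℝ) : P.eval y = (ascPochhammer ℝ K).eval (x + L + y) := by
    simp [P, add_comm]
  have h_node : ∀ k ∈ range (M + 1), c + k ≠ 0 := fun k _ h => hc k (eq_neg_of_add_eq_zero_left h)
  calc _ = ∑ s ∈ range (M + 1),
          (ascPochhammer ℝ L).eval x / ((L + K).factorial * Real.Gamma (x + L)) *
            ((-1) ^ s * P.eval (s : ℝ) / ((c + s) * s.factorial * (M - s).factorial)) := by
        refine sum_congr rfl fun s _ => ?_
        calc _ = (-1) ^ s / ((c + s) * (M - s).factorial) *
              (rbinom (x + s + (L + K : ℕ) - 1) (L + K) * rbinom (x + s - 1) s /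
                Real.Gamma (x + L + s)) := by simp only [div_eq_mul_inv, mul_inv]; ring
          _ = _ := by
            rw [rbinom_mul_rbinom_div_Gamma, hP_eval]
            simp only [div_eq_mul_inv, mul_inv]
            ring
    _ = (ascPochhammer ℝ L).eval x / ((L + K).factorial * Real.Gamma (x + L)) *
          (P.eval (-c) * (Real.Gamma c / Real.Gamma (c + (M + 1 : ℕ)))) := by
        rw [← mul_sum, sum_eval_div_eq_eval_neg_div_ascPochhammer P hP_deg h_node,
          Gamma_div_Gamma_add_natCast hc, div_eq_mul_inv (P.eval _)]
    _ = _ := by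
        rw [rbinom_add_sub_one, rbinom_add_sub_one, hP_eval, ← sub_eq_add_neg]
        field_simp

-- The two shifts are written with `1 - r` because this is again `1 / 2` at `r = 1 / 2`.
theorem stmt1_general (a r : ℝ) {N j i m : ℕ} (hj : j ≤ m + i) (hN : m + i ≤ N)
    (hr : ∀ k : ℕ, m + a - r ≠ -k) :
    ∑ s ∈ range (N - m + 1),
        (-1 : ℝ) ^ s * rbinom (a + N + m + s - 1) (N - j) * rbinom (a + j + m + s - 1) s /
          ((m + s + a - r) * (N - m - s).factorial * Real.Gamma (a + 2 * m + i + s))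
      = (N - m - i).factorial * (m + i - j).factorial * Real.Gamma (m + a - r) /
          ((N - j).factorial * Real.Gamma (a + 2 * m + i) * Real.Gamma (N + a + (1 - r)))
        * rbinom (N - (1 - r)) (N - m - i) * rbinom (a + 2 * m + i - 1) (m + i - j) := by
  obtain ⟨L, hL⟩ := Nat.exists_eq_add_of_le hj
  obtain ⟨K, rfl⟩ := Nat.exists_eq_add_of_le hN
  have hL_cast : (m : ℝ) + i = j + L := by exact_mod_cast hL
  have h_LK : m + i + K - j = L + K := by lia
  have h_K : m + i + K - m - i = K := by lia
  have h_L : m + i - j = L := by lia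
  have h_Gamma_arg : (m + i + K : ℕ) + a + (1 - r) = m + a - r + (m + i + K - m + 1 : ℕ) := by
    rw [add_assoc m, Nat.add_sub_cancel_left]; push_cast; ring
  have h_xL : a + 2 * m + i = a + j + m + L := by linarith
  have h_binom_arg : (m + i + K : ℕ) - (1 - r) = a + j + m + L - (m + a - r) + K - 1 := by
    push_cast; linarith
  rw [h_LK, h_K, h_L, h_Gamma_arg, h_xL, h_binom_arg,
    ← sum_rbinom_mul_rbinom_div_Gamma _ hr _ (by lia : K ≤ m + i + K - m)]
  refine sum_congr rfl fun s _ => ?_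
  have h_top : a + (m + i + K : ℕ) + m + s - 1 = a + j + m + s + (L + K : ℕ) - 1 := by
    push_cast; linarith
  have h_den : (m : ℝ) + s + a - r = m + a - r + s := by ring
  rw [h_top, h_den]

theorem stmt1 (n N p j i m : ℕ) (hn : 1 ≤ n) (hpN : p + 1 ≤ N) (hji : j + i ≤ p)
    (hm : m = p + 1 - i) :
    ∑ s ∈ Finset.range (N - m + 1),
        (-1 : ℝ) ^ s * rbinom ((n : ℝ) / 2 + N + m + s - 1) (N - j)
          * rbinom ((n : ℝ) / 2 + j + m + s - 1) s /
        (((m : ℝ) + s + (n : ℝ) / 2 - 1 / 2) * ((N - m - s).factorial : ℝ)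
          * Real.Gamma ((n : ℝ) / 2 + 2 * m + i + s))
      = ((N - m - i).factorial : ℝ) * ((m + i - j).factorial : ℝ)
          * Real.Gamma ((m : ℝ) + n / 2 - 1 / 2) /
        (((N - j).factorial : ℝ) * Real.Gamma ((n : ℝ) / 2 + 2 * m + i)
          * Real.Gamma ((N : ℝ) + n / 2 + 1 / 2))
        * rbinom ((N : ℝ) - 1 / 2) (N - m - i)
        * rbinom ((n : ℝ) / 2 + 2 * m + i - 1) (m + i - j) := by
  have hm_pos : (1 : ℝ) ≤ m := by exact_mod_cast (by lia : 1 ≤ m)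
  have h_pole (k : ℕ) : (m : ℝ) + n / 2 - 1 / 2 ≠ -k :=
    ne_of_gt (by linarith [n.cast_nonneg (α := ℝ), k.cast_nonneg (α := ℝ)])
  simpa only [sub_half] using stmt1_general (n / 2) (1 / 2) (by lia) (by lia) h_pole
end

section
/- Let n ≥ 1 and N ≥ 1 be integers, and let m ≥ 1 and i ≥ 0 be integers with m+i ≤ N. Then ∑_{s=0}^{N−m} (−1)^s · binom(n/2+N+m+s−1, N−m−i) / [ s! · (N−m−s)! · (m+s+n/2−1/2) ] = Γ(m+n/2−1/2) / Γ(N+n/2+1/2) · binom(N−1/2, N−m−i). -/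
open Finset

/-! For a polynomial `p` of degree at most `M`, Lagrange interpolation at the nodes `0, -1, …, -M`
is the partial fraction expansion of `p(a) / (a (a + 1) ⋯ (a + M))`, whose coefficients are
`(-1) ^ s * p(-s) / (s! * (M - s)!)`. The sum in the theorem is this expansion for
`p(x) = binom(c - x, N - m - i)` at `a = m + n/2 - 1/2`, where `M = N - m` and
`c = n/2 + N + m - 1`, so that `c - a = N - 1/2`; the denominator is `Γ(a + M + 1) / Γ(a)`. -/

open Polynomial

theorem eval_div_prod_sub_eq_sum {F ι : Type*} [Field F] [DecidableEq ι] {s : Finset ι}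
    {v : ι → F} {p : F[X]} {x : F} (hv : Set.InjOn v s) (hp : p.degree < #s)
    (hx : ∀ i ∈ s, x ≠ v i) :
    p.eval x / ∏ i ∈ s, (x - v i)
      = ∑ i ∈ s, p.eval (v i) / ((∏ j ∈ s.erase i, (v i - v j)) * (x - v i)) := by
  have hprod : ∏ i ∈ s, (x - v i) ≠ 0 := prod_ne_zero_iff.2 fun i hi => sub_ne_zero.2 (hx i hi)
  have hbarycentric : p.eval x = (∏ i ∈ s, (x - v i)) *
      ∑ i ∈ s, Lagrange.nodalWeight s v i * (x - v i)⁻¹ * p.eval (v i) := by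
    conv_lhs => rw [Lagrange.eq_interpolate hv hp]
    rw [Lagrange.eval_interpolate_not_at_node _ hx, Lagrange.eval_nodal]
  rw [hbarycentric, mul_div_cancel_left₀ _ hprod]
  refine sum_congr rfl fun i _ => ?_
  rw [Lagrange.nodalWeight, prod_inv_distrib, ← mul_inv, inv_mul_eq_div]

theorem prod_range_natCast_sub_self {R : Type*} [CommRing R] (s : ℕ) :
    ∏ j ∈ range s, ((j : R) - s) = (-1) ^ s * (s.factorial : R) := by
  calc ∏ j ∈ range s, ((j : R) - s) = ∏ j ∈ range s, -((s : R) - j) := by simp only [neg_sub]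
    _ = (-1) ^ s * (s.factorial : R) := by
      rw [prod_neg, card_range, prod_range_natCast_sub, ← Nat.descFactorial_eq_prod_range,
        Nat.descFactorial_self]

theorem prod_range_erase_natCast_sub_self {R : Type*} [CommRing R] (s t : ℕ) :
    ∏ j ∈ (range (s + t + 1)).erase s, ((j : R) - s)
      = (-1) ^ s * ((s.factorial : R) * (t.factorial : R)) := by
  induction t with
  | zero =>
    rw [add_zero, range_add_one, erase_insert notMem_range_self, prod_range_natCast_sub_self,
      Nat.factorial_zero, Nat.cast_one, mul_one]
  | succ t ih =>
    rw [← add_assoc, range_add_one, erase_insert_of_ne (by lia), prod_insert (by simp), ih,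
      Nat.factorial_succ]
    push_cast
    ring

theorem sum_neg_one_pow_mul_eval_neg_div {F : Type*} [Field F] [CharZero F] {p : F[X]} {M : ℕ}
    (hp : p.natDegree ≤ M) {a : F} (ha : ∀ j ∈ range (M + 1), a + j ≠ 0) :
    ∑ s ∈ range (M + 1), (-1) ^ s * p.eval (-s : F) /
        ((s.factorial : F) * ((M - s).factorial : F) * (a + s))
      = p.eval a / ∏ j ∈ range (M + 1), (a + j) := by
  have hinj : Set.InjOn (fun j : ℕ => -(j : F)) (range (M + 1)) :=
    (neg_injective.comp Nat.cast_injective).injOn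
  have hdeg : p.degree < #(range (M + 1)) := by
    rw [card_range]
    exact degree_le_natDegree.trans_lt (by exact_mod_cast Nat.lt_succ_of_le hp)
  have hnodes : ∀ j ∈ range (M + 1), a ≠ -(j : F) := fun j hj h =>
    ha j hj (eq_neg_iff_add_eq_zero.1 h)
  have hfrac := eval_div_prod_sub_eq_sum hinj hdeg hnodes
  simp only [sub_neg_eq_add, neg_add_eq_sub] at hfrac
  rw [hfrac]
  refine sum_congr rfl fun s hs => ?_
  obtain ⟨t, rfl⟩ := Nat.exists_eq_add_of_le (mem_range_succ_iff.1 hs)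
  rw [prod_range_erase_natCast_sub_self, Nat.add_sub_cancel_left, mul_assoc ((-1) ^ s),
    ← div_div _ ((-1) ^ s), div_eq_mul_inv _ ((-1) ^ s), ← inv_pow, inv_neg_one,
    mul_comm (eval _ _)]

theorem rbinom_eq_eval_descPochhammer_div (x : ℝ) (k : ℕ) :
    rbinom x k = (descPochhammer ℝ k).eval x / k.factorial := by
  rw [rbinom, descPochhammer_eval_eq_prod_range]

theorem sum_neg_one_pow_mul_rbinom_add_div (c : ℝ) {a : ℝ} {M k : ℕ} (hk : k ≤ M)
    (ha : ∀ j ∈ range (M + 1), a + j ≠ 0) :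
    ∑ s ∈ range (M + 1), (-1 : ℝ) ^ s * rbinom (c + s) k /
        ((s.factorial : ℝ) * ((M - s).factorial : ℝ) * (a + s))
      = rbinom (c - a) k / ∏ j ∈ range (M + 1), (a + j) := by
  set p : ℝ[X] := C (k.factorial : ℝ)⁻¹ * (descPochhammer ℝ k).comp (C c - X)
  have heval (x : ℝ) : p.eval x = rbinom (c - x) k := by
    simp only [p, eval_mul, eval_C, eval_comp, eval_sub, eval_X,
      rbinom_eq_eval_descPochhammer_div, inv_mul_eq_div]
  have hdeg : p.natDegree ≤ M := calc
    p.natDegree ≤ ((descPochhammer ℝ k).comp (C c - X)).natDegree := natDegree_C_mul_le _ _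
    _ ≤ k * 1 := by
      refine natDegree_comp_le.trans (Nat.mul_le_mul (descPochhammer_natDegree ℝ k).le ?_)
      exact (natDegree_sub_le _ _).trans (by simp)
    _ ≤ M := by rwa [mul_one]
  simpa only [heval, sub_neg_eq_add] using sum_neg_one_pow_mul_eval_neg_div hdeg ha

theorem Gamma_add_natCast_eq_prod_mul {a : ℝ} {k : ℕ} (ha : ∀ j ∈ range k, a + j ≠ 0) :
    Real.Gamma (a + k) = (∏ j ∈ range k, (a + j)) * Real.Gamma a := by
  induction k with
  | zero => simp
  | succ k ih =>
    rw [prod_range_succ, Nat.cast_succ, ← add_assoc,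
      Real.Gamma_add_one (ha k (self_mem_range_succ k)),
      ih fun j hj => ha j (range_subset_range.2 k.le_succ hj)]
    ring

theorem sum_neg_one_pow_mul_rbinom_add_div_eq_Gamma_div_mul (c : ℝ) {a : ℝ} {M k : ℕ}
    (hk : k ≤ M) (ha : ∀ j : ℕ, a ≠ -j) :
    ∑ s ∈ range (M + 1), (-1 : ℝ) ^ s * rbinom (c + s) k /
        ((s.factorial : ℝ) * ((M - s).factorial : ℝ) * (a + s))
      = Real.Gamma a / Real.Gamma (a + (M + 1 : ℕ)) * rbinom (c - a) k := by
  have hadd (j : ℕ) : a + j ≠ 0 := fun h => ha j (eq_neg_of_add_eq_zero_left h)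
  rw [sum_neg_one_pow_mul_rbinom_add_div c hk fun j _ => hadd j,
    Gamma_add_natCast_eq_prod_mul fun j _ => hadd j,
    div_mul_cancel_right₀ (Real.Gamma_ne_zero ha), inv_mul_eq_div]

theorem stmt2_general (x : ℝ) (N m i : ℕ) (hx : ∀ j : ℕ, (m : ℝ) + x / 2 - 1 / 2 ≠ -j)
    (hmi : m + i ≤ N) :
    ∑ s ∈ range (N - m + 1),
        (-1 : ℝ) ^ s * rbinom (x / 2 + N + m + s - 1) (N - m - i) /
          ((s.factorial : ℝ) * ((N - m - s).factorial : ℝ) * ((m : ℝ) + s + x / 2 - 1 / 2))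
      = Real.Gamma ((m : ℝ) + x / 2 - 1 / 2) / Real.Gamma ((N : ℝ) + x / 2 + 1 / 2)
          * rbinom ((N : ℝ) - 1 / 2) (N - m - i) := by
  have hsum := sum_neg_one_pow_mul_rbinom_add_div_eq_Gamma_div_mul (x / 2 + N + m - 1)
    (Nat.sub_le (N - m) i) hx
  have hΓ : (m : ℝ) + x / 2 - 1 / 2 + (N - m + 1 : ℕ) = N + x / 2 + 1 / 2 := by
    push_cast [Nat.cast_sub ((Nat.le_add_right m i).trans hmi)]
    ring
  have hrbinom : x / 2 + N + m - 1 - ((m : ℝ) + x / 2 - 1 / 2) = N - 1 / 2 := by ring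
  rw [hΓ, hrbinom] at hsum
  convert hsum using 5 <;> ring

theorem stmt2 (n N m i : ℕ) (hn : 1 ≤ n) (hN : 1 ≤ N) (hm : 1 ≤ m) (hmi : m + i ≤ N) :
    ∑ s ∈ Finset.range (N - m + 1),
        (-1 : ℝ) ^ s * rbinom ((n : ℝ) / 2 + N + m + s - 1) (N - m - i) /
          ((s.factorial : ℝ) * ((N - m - s).factorial : ℝ)
            * ((m : ℝ) + s + (n : ℝ) / 2 - 1 / 2))
      = Real.Gamma ((m : ℝ) + n / 2 - 1 / 2) / Real.Gamma ((N : ℝ) + n / 2 + 1 / 2)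
          * rbinom ((N : ℝ) - 1 / 2) (N - m - i) := by
  refine stmt2_general n N m i (fun j => ?_) hmi
  linarith [n.cast_nonneg (α := ℝ), j.cast_nonneg (α := ℝ), Nat.one_le_cast (α := ℝ).2 hm]
end

section
/- Let N ≥ 0 and L be integers with 0 ≤ L ≤ 2N, and let m be a real number. Then ∑_{i=L}^{2N} (−1)^i · binom(N−m, i) · binom(i, L) = (−1)^L · binom(N−m, L) · binom(m+N, 2N−L). -/
open Finset

/-!
Trinomial revision, `binom(x, i) binom(i, L) = binom(x, L) binom(x - L, i - L)`, takes the factor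
`(-1)^L binom(x, L)` out of the sum and leaves an alternating sum of `binom(x - L, j)`. Upper
negation makes its terms the multiset coefficients of `L - x`, whose partial sums telescope by
Pascal's rule.
-/

theorem choose_eq_prod_range_div_factorial {K : Type*} [Field K] [CharZero K] (x : K) (k : ℕ) :
    Ring.choose x k = (∏ i ∈ range k, (x - i)) / (k.factorial : K) := by
  rw [Ring.choose_eq_smul, ← Polynomial.aeval_eq_smeval, Polynomial.aeval_def,
    Polynomial.eval₂_eq_eval_map, descPochhammer_map, descPochhammer_eval_eq_prod_range,
    smul_eq_mul, div_eq_inv_mul]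

theorem rbinom_eq_choose (x : ℝ) (k : ℕ) : rbinom x k = Ring.choose x k :=
  (choose_eq_prod_range_div_factorial x k).symm

theorem sum_range_multichoose {R : Type*} [NonAssocSemiring R] [Pow R ℕ] [NatPowAssoc R]
    [BinomialRing R] (r : R) (n : ℕ) :
    ∑ i ∈ range (n + 1), Ring.multichoose r i = Ring.multichoose (r + 1) n := by
  induction n with
  | zero => simp only [zero_add, sum_range_one, Ring.multichoose_zero_right]
  | succ n ih => rw [sum_range_succ, ih, Ring.multichoose_succ_succ, add_comm]

section

variable {R : Type*} [Ring R] [BinomialRing R]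

theorem neg_one_pow_mul_choose (r : R) (n : ℕ) :
    (-1) ^ n * Ring.choose r n = Ring.multichoose (-r) n := by
  have h : Ring.choose r n = (-1) ^ n * Ring.multichoose (-r) n := by
    rw [← neg_neg r, Ring.choose_neg', neg_neg, Units.smul_def, zsmul_eq_mul,
      Int.cast_negOnePow_natCast]
  rw [h, ← mul_assoc, ← pow_add, Even.neg_one_pow ⟨n, rfl⟩, one_mul]

theorem sum_range_neg_one_pow_mul_choose (r : R) (n : ℕ) :
    ∑ i ∈ range (n + 1), (-1) ^ i * Ring.choose r i = Ring.choose (n - r) n := by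
  simp only [neg_one_pow_mul_choose]
  rw [sum_range_multichoose, Ring.multichoose_eq]
  congr 1
  abel

theorem neg_one_pow_mul_choose_add_mul_choose (r : R) (k j : ℕ) :
    (-1) ^ (k + j) * Ring.choose r (k + j) * ((k + j).choose k : R) =
      (-1) ^ k * Ring.choose r k * ((-1) ^ j * Ring.choose (r - k) j) := by
  have hrev : Ring.choose r (k + j) * ((k + j).choose k : R) =
      Ring.choose r k * Ring.choose (r - k) j := by
    simpa [← Nat.cast_comm] using Ring.choose_smul_choose r (Nat.le_add_right k j)
  have hcomm : Commute ((-1) ^ j) (Ring.choose r k) := (Commute.neg_one_left _).pow_left j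
  rw [mul_assoc, hrev, pow_add, mul_assoc, hcomm.left_comm, mul_assoc]

theorem stmt3_general (r : R) {n k : ℕ} (hk : k ≤ n) :
    ∑ i ∈ Icc k n, (-1) ^ i * Ring.choose r i * (i.choose k : R) =
      (-1) ^ k * Ring.choose r k * Ring.choose (n - r) (n - k) := by
  have harg : (n : R) - r = (n - k : ℕ) - (r - k) := by
    rw [Nat.cast_sub hk, sub_sub_sub_cancel_right]
  rw [harg, ← sum_range_neg_one_pow_mul_choose, mul_sum, ← Ico_add_one_right_eq_Icc,
    sum_Ico_eq_sum_range, Nat.sub_add_comm hk]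
  exact sum_congr rfl fun j _ => neg_one_pow_mul_choose_add_mul_choose r k j

end

theorem stmt3 (N L : ℕ) (hL : L ≤ 2 * N) (m : ℝ) :
    ∑ i ∈ Finset.Icc L (2 * N),
        (-1 : ℝ) ^ i * rbinom ((N : ℝ) - m) i * (i.choose L : ℝ)
      = (-1 : ℝ) ^ L * rbinom ((N : ℝ) - m) L * rbinom (m + N) (2 * N - L) := by
  have harg : m + N = (2 * N : ℕ) - (N - m) := by push_cast; ring
  simpa only [rbinom_eq_choose, harg] using stmt3_general ((N : ℝ) - m) hL
end

section
/- Let N ≥ 1, m ≥ 1 and L be integers with 0 ≤ L ≤ 2N and L−N+m−1 ≥ 0. Then ∑_{i=L}^{2N} ( (i−N+m−1)! / i! ) · binom(i, L) = ( (L−N+m−1)! / L! ) · binom(N+m, 2N−L). -/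
open Finset

/-!
Put `i = L + j` and `a = L + m - N - 1`. The `j`-th summand is `(a + j)! / (L! * j!)`, which is
`a! / L!` times `(j + a).choose a`, so the sum is a multiple of a hockey-stick sum.
-/

section CharZero

variable {𝕜 : Type*} [Semifield 𝕜] [CharZero 𝕜]

theorem factorial_div_factorial_mul_choose (a L j : ℕ) :
    ((a + j).factorial : 𝕜) / ((L + j).factorial : 𝕜) * ((L + j).choose L : 𝕜)
      = (a.factorial : 𝕜) / (L.factorial : 𝕜) * ((j + a).choose a : 𝕜) := by
  have factorial_ne_zero (n : ℕ) : (n.factorial : 𝕜) ≠ 0 := mod_cast n.factorial_ne_zero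
  calc
    _ = ((a + j).factorial : 𝕜) / (L.factorial * j.factorial) := by
      rw [Nat.cast_add_choose, div_mul_div_cancel₀ (factorial_ne_zero (L + j))]
    _ = (a.factorial : 𝕜) / (L.factorial : 𝕜) * ((j + a).choose a : 𝕜) := by
      have := factorial_ne_zero a
      rw [add_comm j a, Nat.cast_add_choose]
      field_simp

theorem sum_range_factorial_div_factorial_mul_choose (a L n : ℕ) :
    ∑ j ∈ range (n + 1),
        ((a + j).factorial : 𝕜) / ((L + j).factorial : 𝕜) * ((L + j).choose L : 𝕜)
      = (a.factorial : 𝕜) / (L.factorial : 𝕜) * ((n + a + 1).choose (a + 1) : 𝕜) := by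
  simp only [factorial_div_factorial_mul_choose]
  rw [← mul_sum, ← Nat.cast_sum, Nat.sum_range_add_choose]

theorem stmt4_general {M N m L : ℕ} (hL : L ≤ M) (h : N + 1 ≤ L + m) :
    ∑ i ∈ Icc L M, ((i + m - N - 1).factorial : 𝕜) / (i.factorial : 𝕜) * (i.choose L : 𝕜)
      = ((L + m - N - 1).factorial : 𝕜) / (L.factorial : 𝕜)
          * ((M + m - N).choose (M - L) : 𝕜) := by
  obtain ⟨n, rfl⟩ := Nat.exists_eq_add_of_le hL
  obtain ⟨a, ha⟩ := Nat.exists_eq_add_of_le h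
  have shift (j : ℕ) : L + j + m - N - 1 = a + j := by omega
  have choose_symm : (L + n + m - N).choose (L + n - L) = (n + a + 1).choose (a + 1) := by
    rw [show L + n + m - N = n + a + 1 by omega]
    exact Nat.choose_symm_of_eq_add (by omega)
  rw [← Ico_add_one_right_eq_Icc, sum_Ico_eq_sum_range, show L + n + 1 - L = n + 1 by omega,
    show L + m - N - 1 = a by omega, choose_symm]
  simp only [shift, sum_range_factorial_div_factorial_mul_choose]

end CharZero

theorem stmt4 (N m L : ℕ) (hN : 1 ≤ N) (hm : 1 ≤ m) (hL : L ≤ 2 * N) (h : N + 1 ≤ L + m) :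
    ∑ i ∈ Finset.Icc L (2 * N),
        ((i + m - N - 1).factorial : ℝ) / (i.factorial : ℝ) * (i.choose L : ℝ)
      = ((L + m - N - 1).factorial : ℝ) / (L.factorial : ℝ)
          * ((N + m).choose (2 * N - L) : ℝ) := by
  rw [stmt4_general hL h, show 2 * N + m - N = N + m by omega]
end

section
/- Let n ≥ 1 and let j, k be natural numbers. If j ≤ k, then for every x ∈ ℝ^n, Δ^j(|x|^{2k}) = 4^j · j! · ( k!/(k−j)! ) · binom(n/2+k−1, j) · |x|^{2(k−j)}. If j > k, then Δ^j(|x|^{2k}) = 0 for every x ∈ ℝ^n. -/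
open Finset

/-- Partial derivative along the `i`-th standard coordinate direction of `ℝⁿ`. -/
noncomputable def pd (n : ℕ) (i : Fin n) (f : EuclideanSpace ℝ (Fin n) → ℝ) :
    EuclideanSpace ℝ (Fin n) → ℝ :=
  fun x => fderiv ℝ f x (EuclideanSpace.single i 1)

/-- The Laplacian `Δf = ∑ᵢ ∂²f/∂xᵢ²` on `ℝⁿ`. -/
noncomputable def lapl (n : ℕ) (f : EuclideanSpace ℝ (Fin n) → ℝ) :
    EuclideanSpace ℝ (Fin n) → ℝ :=
  fun x => ∑ i : Fin n, pd n i (pd n i f) x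

open Filter Topology

/-!
A radial function satisfies `Δ (φ (|x|²)) = 4 |x|² φ''(|x|²) + 2 n φ'(|x|²)`. For `φ t = t ^ k` this
says that `Δ` sends `|x|^(2k)` to `4 k (n/2 + k - 1) |x|^(2(k-1))`, so that `Δ^j` multiplies by the
falling factorials of length `j` of `k` and of `n/2 + k - 1`. The former vanishes when `j > k`, so
one formula for `Δ^j` covers both cases, the truncation of `k - j` being harmless.
-/

theorem rbinom_zero (x : ℝ) : rbinom x 0 = 1 := by
  simp [rbinom]

theorem rbinom_succ (x : ℝ) (k : ℕ) : (k + 1) * rbinom x (k + 1) = (x - k) * rbinom x k := by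
  rw [rbinom, rbinom, prod_range_succ, Nat.factorial_succ]
  push_cast
  field_simp

theorem hasFDerivAt_comp_norm_sq {E : Type*} [NormedAddCommGroup E] [InnerProductSpace ℝ E]
    {φ : ℝ → ℝ} {φ' : ℝ} {x : E} (hφ : HasDerivAt φ φ' (‖x‖ ^ 2)) :
    HasFDerivAt (fun y : E => φ (‖y‖ ^ 2)) ((2 * φ') • innerSL ℝ x) x := by
  refine (hφ.comp_hasFDerivAt x (hasStrictFDerivAt_norm_sq x).hasFDerivAt).congr_fderiv ?_
  rw [← Nat.cast_smul_eq_nsmul ℝ, smul_smul, Nat.cast_ofNat, mul_comm]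

section PartialDerivatives

variable {n : ℕ} {i : Fin n} {f g : EuclideanSpace ℝ (Fin n) → ℝ} {x : EuclideanSpace ℝ (Fin n)}

theorem pd_congr_of_eventuallyEq (h : f =ᶠ[𝓝 x] g) : pd n i f x = pd n i g x := by
  rw [pd, pd, h.fderiv_eq]

theorem pd_const_mul (i : Fin n) (c : ℝ) (f : EuclideanSpace ℝ (Fin n) → ℝ) :
    pd n i (fun y => c * f y) = fun x => c * pd n i f x := by
  funext x
  have h : fderiv ℝ (fun y => c * f y) x = c • fderiv ℝ f x :=
    congrFun (fderiv_const_smul_field c) x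
  rw [pd, h, smul_apply, smul_eq_mul, pd]

theorem pd_mul (hf : DifferentiableAt ℝ f x) (hg : DifferentiableAt ℝ g x) :
    pd n i (fun y => f y * g y) x = f x * pd n i g x + g x * pd n i f x := by
  simp only [pd, fderiv_fun_mul hf hg, add_apply, smul_apply, smul_eq_mul]

theorem pd_coord_self (i : Fin n) (x : EuclideanSpace ℝ (Fin n)) : pd n i (fun y => y i) x = 1 := by
  have h : HasFDerivAt (fun y : EuclideanSpace ℝ (Fin n) => y i) _ x :=
    (EuclideanSpace.proj i : EuclideanSpace ℝ (Fin n) →L[ℝ] ℝ).hasFDerivAt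
  simp [pd, h.fderiv]

theorem pd_comp_norm_sq {φ : ℝ → ℝ} {φ' : ℝ} (hφ : HasDerivAt φ φ' (‖x‖ ^ 2)) :
    pd n i (fun y => φ (‖y‖ ^ 2)) x = 2 * (φ' * x i) := by
  rw [pd, (hasFDerivAt_comp_norm_sq hφ).fderiv]
  simp [EuclideanSpace.inner_single_right, mul_assoc]

theorem pd_pd_comp_norm_sq {φ φ' : ℝ → ℝ} {φ'' : ℝ}
    (hφ : ∀ᶠ t in 𝓝 (‖x‖ ^ 2), HasDerivAt φ (φ' t) t) (hφ' : HasDerivAt φ' φ'' (‖x‖ ^ 2)) :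
    pd n i (pd n i (fun y => φ (‖y‖ ^ 2))) x = 4 * φ'' * x i ^ 2 + 2 * φ' (‖x‖ ^ 2) := by
  have hnorm : Tendsto (fun y : EuclideanSpace ℝ (Fin n) => ‖y‖ ^ 2) (𝓝 x) (𝓝 (‖x‖ ^ 2)) :=
    (continuous_norm.pow 2).tendsto x
  have hfirst : pd n i (fun y => φ (‖y‖ ^ 2)) =ᶠ[𝓝 x] fun y => 2 * (φ' (‖y‖ ^ 2) * y i) :=
    (hnorm.eventually hφ).mono fun _ hy => pd_comp_norm_sq hy
  have hcoord : DifferentiableAt ℝ (fun y : EuclideanSpace ℝ (Fin n) => y i) x := by fun_prop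
  calc pd n i (pd n i (fun y => φ (‖y‖ ^ 2))) x
      = 2 * pd n i (fun y => φ' (‖y‖ ^ 2) * y i) x := by
        rw [pd_congr_of_eventuallyEq hfirst, pd_const_mul]
    _ = 2 * (φ' (‖x‖ ^ 2) * 1 + x i * (2 * (φ'' * x i))) := by
        rw [pd_mul (hasFDerivAt_comp_norm_sq hφ').differentiableAt hcoord, pd_coord_self,
          pd_comp_norm_sq hφ']
    _ = 4 * φ'' * x i ^ 2 + 2 * φ' (‖x‖ ^ 2) := by ring

end PartialDerivatives

section Laplacian

variable {n : ℕ}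

theorem lapl_const_mul (c : ℝ) (f : EuclideanSpace ℝ (Fin n) → ℝ) :
    lapl n (fun y => c * f y) = fun x => c * lapl n f x := by
  funext x
  simp only [lapl, pd_const_mul, mul_sum]

theorem lapl_comp_norm_sq {x : EuclideanSpace ℝ (Fin n)} {φ φ' : ℝ → ℝ} {φ'' : ℝ}
    (hφ : ∀ᶠ t in 𝓝 (‖x‖ ^ 2), HasDerivAt φ (φ' t) t) (hφ' : HasDerivAt φ' φ'' (‖x‖ ^ 2)) :
    lapl n (fun y => φ (‖y‖ ^ 2)) x = 4 * φ'' * ‖x‖ ^ 2 + 2 * n * φ' (‖x‖ ^ 2) := by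
  simp only [lapl, pd_pd_comp_norm_sq hφ hφ', sum_add_distrib, ← mul_sum,
    ← EuclideanSpace.real_norm_sq_eq, sum_const, card_univ, Fintype.card_fin, nsmul_eq_mul]
  ring

theorem lapl_norm_pow_two_mul (k : ℕ) :
    lapl n (fun y => ‖y‖ ^ (2 * k)) =
      fun x => 4 * k * ((n : ℝ) / 2 + k - 1) * ‖x‖ ^ (2 * (k - 1)) := by
  funext x
  have hfirst (t : ℝ) : HasDerivAt (fun t => t ^ k) (k * t ^ (k - 1)) t := hasDerivAt_pow k t
  have hsecond := (hasDerivAt_pow (k - 1) (‖x‖ ^ 2)).const_mul (k : ℝ)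
  have hmul (t : ℝ) : k * ((k - 1 : ℕ) * t ^ (k - 1 - 1)) * t = k * (k - 1) * t ^ (k - 1) := by
    rcases k with _ | _ | k
    · simp
    · simp
    · simp only [Nat.add_sub_cancel, pow_succ]
      push_cast
      ring
  simp only [pow_mul]
  rw [lapl_comp_norm_sq (.of_forall hfirst) hsecond]
  linear_combination 4 * hmul (‖x‖ ^ 2)

theorem iterate_lapl_norm_pow_two_mul (j k : ℕ) :
    (lapl n)^[j] (fun y => ‖y‖ ^ (2 * k)) =
      fun x => 4 ^ j * (j.factorial : ℝ) * (k.descFactorial j : ℝ) *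
        rbinom ((n : ℝ) / 2 + k - 1) j * ‖x‖ ^ (2 * (k - j)) := by
  induction j with
  | zero => simp [rbinom_zero]
  | succ j ih =>
    rw [Function.iterate_succ_apply', ih, lapl_const_mul, lapl_norm_pow_two_mul]
    funext x
    rw [Nat.descFactorial_succ, Nat.factorial_succ, Nat.sub_sub]
    rcases le_or_gt j k with hjk | hkj
    · have hbinom := rbinom_succ ((n : ℝ) / 2 + k - 1) j
      push_cast [Nat.cast_sub hjk]
      linear_combination (-4 * 4 ^ j * (j.factorial : ℝ) * (k - j) * k.descFactorial j *
        ‖x‖ ^ (2 * (k - (j + 1)))) * hbinom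
    · simp [Nat.descFactorial_of_lt hkj]

end Laplacian

theorem stmt6 (n j k : ℕ) (hn : 1 ≤ n) :
    (j ≤ k → ∀ x : EuclideanSpace ℝ (Fin n),
      (lapl n)^[j] (fun y => ‖y‖ ^ (2 * k)) x
        = 4 ^ j * (j.factorial : ℝ) * ((k.factorial : ℝ) / ((k - j).factorial : ℝ))
            * rbinom ((n : ℝ) / 2 + k - 1) j * ‖x‖ ^ (2 * (k - j)))
    ∧ (k < j → ∀ x : EuclideanSpace ℝ (Fin n),
      (lapl n)^[j] (fun y => ‖y‖ ^ (2 * k)) x = 0) := by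
  rw [iterate_lapl_norm_pow_two_mul]
  refine ⟨fun hjk x => ?_, fun hkj x => by simp [Nat.descFactorial_of_lt hkj]⟩
  have hdesc : (k.descFactorial j : ℝ) = k.factorial / (k - j).factorial := by
    rw [eq_div_iff (by positivity), mul_comm]
    exact_mod_cast Nat.factorial_mul_descFactorial hjk
  rw [hdesc]
end

section
/- Let n ≥ 1, let j ≥ 0 be an integer, and let P be a harmonic polynomial in n real variables which is homogeneous of degree 2j+1. Let k be a natural number. If 2j+1 ≤ k, then for every x ∈ ℝ^n, P(∂)(|x|^{2k}) = 2^{2j+1} · ( k!/(k−2j−1)! ) · P(x) · |x|^{2(k−2j−1)}. If k < 2j+1, then P(∂)(|x|^{2k}) = 0 for every x ∈ ℝ^n. -/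
open Finset

/-- Iterated partial derivative `∂^α` for a multi-index `α`. -/
noncomputable def pdMulti (n : ℕ) (α : Fin n →₀ ℕ) (f : EuclideanSpace ℝ (Fin n) → ℝ) :
    EuclideanSpace ℝ (Fin n) → ℝ :=
  (List.finRange n).foldr (fun i g => (pd n i)^[α i] g) f

/-- The constant-coefficient differential operator `P(∂) = ∑_α c_α ∂^α` associated to the
polynomial `P = ∑_α c_α x^α`. -/
noncomputable def polyOp (n : ℕ) (P : MvPolynomial (Fin n) ℝ)
    (f : EuclideanSpace ℝ (Fin n) → ℝ) : EuclideanSpace ℝ (Fin n) → ℝ :=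
  fun x => ∑ α ∈ P.support, P.coeff α * pdMulti n α f x

/-!
The map `P ↦ P(∂)` is an algebra homomorphism on formal polynomials. Write `N = ∑ xᵢ²`, let `g` be
a polynomial in one variable and let `P` be homogeneous of degree `d + 1`. By Euler's identity
`(d + 1) P = ∑ xᵢ ∂ᵢP`, so `(d + 1) P(∂) g(N) = ∑ ∂ᵢ ((∂ᵢP)(∂) g(N))`. If `P` is harmonic, so is
each `∂ᵢP`, and induction on the degree turns the right-hand side into `2ᵈ ∑ ∂ᵢ (g⁽ᵈ⁾(N) ∂ᵢP)`,
which is `2ᵈ (g⁽ᵈ⁾(N) ΔP + 2 (d + 1) g⁽ᵈ⁺¹⁾(N) P)` by the Leibniz rule and Euler's identity again.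
Hence `P(∂) g(N) = 2ᵈ g⁽ᵈ⁾(N) P` for harmonic homogeneous `P` of degree `d`; take `g = tᵏ`.
-/

open MvPolynomial

section Semiring

open scoped IsMulCommutative

variable {σ R : Type*} [CommSemiring R]

theorem pderiv_pderiv_comm (i j : σ) (p : MvPolynomial σ R) :
    pderiv i (pderiv j p) = pderiv j (pderiv i p) := by
  classical
  obtain rfl | hij := eq_or_ne i j
  · rfl
  · ext m
    simp only [coeff_pderiv, Finsupp.add_apply, Finsupp.single_eq_of_ne hij,
      Finsupp.single_eq_of_ne hij.symm, add_zero, add_right_comm m (.single i 1)]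
    ring

variable (σ R) in
/-- The algebra of constant-coefficient differential operators on polynomials, generated by the
formal partial derivatives. -/
noncomputable abbrev pderivAlgebra : Subalgebra R (Module.End R (MvPolynomial σ R)) :=
  Algebra.adjoin R (Set.range fun i => (pderiv i).toLinearMap)

instance : IsMulCommutative (pderivAlgebra σ R) :=
  Algebra.isMulCommutative_adjoin R <| by
    rintro _ ⟨i, rfl⟩ _ ⟨j, rfl⟩
    exact LinearMap.ext (pderiv_pderiv_comm i j)

/-- The formal counterpart `P ↦ P(∂)` of `polyOp`, as the algebra homomorphism sending `X i` to
`pderiv i`. It is built through `pderivAlgebra` because `MvPolynomial.aeval` requires a commutative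
target. -/
noncomputable def formalPolyOp : MvPolynomial σ R →ₐ[R] Module.End R (MvPolynomial σ R) :=
  (pderivAlgebra σ R).val.comp <|
    aeval fun i => ⟨(pderiv i).toLinearMap, Algebra.subset_adjoin ⟨i, rfl⟩⟩

theorem formalPolyOp_C_apply (c : R) (Q : MvPolynomial σ R) :
    formalPolyOp (C c) Q = C c * Q := by
  rw [← algebraMap_eq, AlgHom.commutes, Module.algebraMap_end_apply, Algebra.smul_def]

theorem formalPolyOp_X_apply (i : σ) (Q : MvPolynomial σ R) :
    formalPolyOp (X i) Q = pderiv i Q := by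
  simp [formalPolyOp]

theorem formalPolyOp_X_pow_apply (i : σ) (m : ℕ) (Q : MvPolynomial σ R) :
    formalPolyOp (X i ^ m) Q = (pderiv i)^[m] Q := by
  rw [map_pow, Module.End.pow_apply]
  exact congrArg (·^[m] Q) (funext (formalPolyOp_X_apply i))

theorem formalPolyOp_X_mul_apply (i : σ) (P Q : MvPolynomial σ R) :
    formalPolyOp (X i * P) Q = pderiv i (formalPolyOp P Q) := by
  rw [map_mul, Module.End.mul_apply, formalPolyOp_X_apply]

variable [Fintype σ]

theorem sum_pderiv_pderiv_pderiv (i : σ) (P : MvPolynomial σ R) :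
    ∑ j, pderiv j (pderiv j (pderiv i P)) = pderiv i (∑ j, pderiv j (pderiv j P)) := by
  simp only [map_sum, pderiv_pderiv_comm _ i]

theorem pderiv_aeval_psum_two (g : Polynomial R) (i : σ) :
    pderiv i (Polynomial.aeval (psum σ R 2) g) =
      2 * Polynomial.aeval (psum σ R 2) (Polynomial.derivative g) * X i := by
  classical
  have pderiv_psum : pderiv i (psum σ R 2) = 2 * X i := by
    simp [psum, pderiv_X, Pi.single_apply]
  rw [Derivation.map_aeval, pderiv_psum, smul_eq_mul]
  ring

theorem sum_pderiv_aeval_psum_two_mul_pderiv (g : Polynomial R) {d : ℕ} {P : MvPolynomial σ R}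
    (hhom : P.IsHomogeneous d) :
    ∑ i, pderiv i (Polynomial.aeval (psum σ R 2) g * pderiv i P) =
      Polynomial.aeval (psum σ R 2) g * ∑ i, pderiv i (pderiv i P) +
        d • (2 * Polynomial.aeval (psum σ R 2) (Polynomial.derivative g) * P) := by
  simp only [pderiv_mul, pderiv_aeval_psum_two, mul_assoc _ (X _), Finset.sum_add_distrib,
    ← Finset.mul_sum, hhom.sum_X_mul_pderiv, mul_smul_comm]
  exact add_comm _ _

end Semiring

/-- **Hobson's formula**, with `psum σ R 2` in the role of the squared norm. -/
theorem formalPolyOp_aeval_psum_two {σ R : Type*} [Fintype σ] [CommSemiring R]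
    [IsAddTorsionFree R] (g : Polynomial R) {d : ℕ} {P : MvPolynomial σ R}
    (hharm : ∑ i, pderiv i (pderiv i P) = 0) (hhom : P.IsHomogeneous d) :
    formalPolyOp P (Polynomial.aeval (psum σ R 2) g) =
      2 ^ d * Polynomial.aeval (psum σ R 2) (Polynomial.derivative^[d] g) * P := by
  induction d generalizing P with
  | zero =>
    obtain ⟨c, rfl⟩ : ∃ c, P = C c :=
      ⟨_, totalDegree_eq_zero_iff_eq_C.1 ((totalDegree_zero_iff_isHomogeneous σ).2 hhom)⟩
    rw [formalPolyOp_C_apply, pow_zero, one_mul, Function.iterate_zero_apply, mul_comm]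
  | succ d ih =>
    set N := psum σ R 2
    have ih_pderiv (i : σ) : formalPolyOp (pderiv i P) (Polynomial.aeval N g) =
        2 ^ d * (Polynomial.aeval N (Polynomial.derivative^[d] g) * pderiv i P) := by
      rw [ih (by rw [sum_pderiv_pderiv_pderiv, hharm, map_zero]) hhom.pderiv, mul_assoc]
    refine smul_right_injective _ d.succ_ne_zero ?_
    calc (d + 1) • formalPolyOp P (Polynomial.aeval N g)
        = formalPolyOp (∑ i, X i * pderiv i P) (Polynomial.aeval N g) := by
          rw [hhom.sum_X_mul_pderiv, map_nsmul, LinearMap.smul_apply]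
      _ = ∑ i, pderiv i (formalPolyOp (pderiv i P) (Polynomial.aeval N g)) := by
          simp only [map_sum, LinearMap.sum_apply, formalPolyOp_X_mul_apply]
      _ = 2 ^ d * ∑ i, pderiv i
            (Polynomial.aeval N (Polynomial.derivative^[d] g) * pderiv i P) := by
          have two_pow : (2 : MvPolynomial σ R) ^ d = C (2 ^ d) := by
            rw [map_pow, map_ofNat]
          simp only [ih_pderiv, two_pow, pderiv_C_mul, Finset.mul_sum]
      _ = (d + 1) •
            (2 ^ (d + 1) * Polynomial.aeval N (Polynomial.derivative^[d + 1] g) * P) := by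
          rw [sum_pderiv_aeval_psum_two_mul_pderiv _ hhom, hharm, mul_zero, zero_add,
            ← Function.iterate_succ_apply' Polynomial.derivative, mul_smul_comm]
          ring

theorem hasFDerivAt_mvPolynomial_eval {σ 𝕜 : Type*} [Fintype σ] [NontriviallyNormedField 𝕜]
    (p : MvPolynomial σ 𝕜) (x : σ → 𝕜) :
    HasFDerivAt (fun y => eval y p)
      (∑ i, eval x (pderiv i p) • (ContinuousLinearMap.proj i : (σ → 𝕜) →L[𝕜] 𝕜)) x := by
  classical
  induction p using MvPolynomial.induction_on with
  | C a =>
    simp only [eval_C]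
    refine (hasFDerivAt_const a x).congr_fderiv ?_
    ext v
    simp
  | add p q hp hq =>
    simp only [map_add]
    refine (hp.add hq).congr_fderiv ?_
    ext v
    simp [add_mul, Finset.sum_add_distrib]
  | mul_X p j hp =>
    simp only [map_mul, eval_X]
    refine (hp.mul (hasFDerivAt_apply j x)).congr_fderiv ?_
    ext v
    simp [pderiv_X, Pi.single_apply, add_mul, Finset.sum_add_distrib, Finset.mul_sum,
      apply_ite, mul_assoc]

section EuclideanSpace

variable {n : ℕ}

theorem pd_eval (i : Fin n) (Q : MvPolynomial (Fin n) ℝ) :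
    pd n i (fun y => eval y.ofLp Q) = fun y => eval y.ofLp (pderiv i Q) := by
  funext x
  have hasFDerivAt_ofLp : HasFDerivAt (fun y : EuclideanSpace ℝ (Fin n) => eval y.ofLp Q) _ x :=
    (hasFDerivAt_mvPolynomial_eval Q x.ofLp).comp x
      (EuclideanSpace.equiv (Fin n) ℝ).toContinuousLinearMap.hasFDerivAt
  rw [pd, hasFDerivAt_ofLp.fderiv]
  simp

theorem pdMulti_eval (α : Fin n →₀ ℕ) (Q : MvPolynomial (Fin n) ℝ) :
    pdMulti n α (fun y => eval y.ofLp Q) =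
      fun y => eval y.ofLp (formalPolyOp (monomial α 1) Q) := by
  rw [pdMulti, monomial_eq, C_1, one_mul, Finsupp.prod_fintype _ _ fun _ => pow_zero _,
    Fin.prod_univ_def]
  have semiconj_eval (i : Fin n) :
      Function.Semiconj (fun Q y => eval y.ofLp Q) (pderiv i) (pd n i) :=
    fun Q => (pd_eval i Q).symm
  induction List.finRange n with
  | nil => simp
  | cons i l ih =>
    rw [List.foldr_cons, ih, List.map_cons, List.prod_cons, map_mul, Module.End.mul_apply,
      formalPolyOp_X_pow_apply]
    exact ((semiconj_eval i).iterate_right (α i) _).symm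

theorem polyOp_eval (P Q : MvPolynomial (Fin n) ℝ) (x : EuclideanSpace ℝ (Fin n)) :
    polyOp n P (fun y => eval y.ofLp Q) x = eval x.ofLp (formalPolyOp P Q) := by
  have monomial_eq_smul (α : Fin n →₀ ℕ) (c : ℝ) : monomial α c = c • monomial α 1 := by
    rw [smul_monomial, smul_eq_mul, mul_one]
  conv_rhs => rw [P.as_sum]
  simp only [polyOp, pdMulti_eval, monomial_eq_smul _ (coeff _ P), map_sum, map_smul,
    LinearMap.sum_apply, LinearMap.smul_apply, smul_eval]

theorem eval_aeval_psum_two (g : Polynomial ℝ) (x : EuclideanSpace ℝ (Fin n)) :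
    eval x.ofLp (Polynomial.aeval (psum (Fin n) ℝ 2) g) = g.eval (‖x‖ ^ 2) := by
  rw [EuclideanSpace.real_norm_sq_eq, ← coe_aeval_eq_eval, AlgHom.coe_toRingHom,
    ← Polynomial.aeval_algHom_apply, Polynomial.coe_aeval_eq_eval]
  simp [psum]

variable {d : ℕ} {P : MvPolynomial (Fin n) ℝ}

theorem polyOp_eval_norm_sq (g : Polynomial ℝ) (hharm : ∑ i, pderiv i (pderiv i P) = 0)
    (hhom : P.IsHomogeneous d) (x : EuclideanSpace ℝ (Fin n)) :
    polyOp n P (fun y => g.eval (‖y‖ ^ 2)) x =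
      2 ^ d * (Polynomial.derivative^[d] g).eval (‖x‖ ^ 2) * eval x.ofLp P := by
  simp only [← eval_aeval_psum_two, polyOp_eval, formalPolyOp_aeval_psum_two g hharm hhom,
    map_mul, map_pow, map_ofNat]

theorem polyOp_norm_pow (k : ℕ) (hharm : ∑ i, pderiv i (pderiv i P) = 0)
    (hhom : P.IsHomogeneous d) (x : EuclideanSpace ℝ (Fin n)) :
    polyOp n P (fun y => ‖y‖ ^ (2 * k)) x =
      2 ^ d * (k.descFactorial d : ℝ) * eval x.ofLp P * ‖x‖ ^ (2 * (k - d)) := by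
  have hobson := polyOp_eval_norm_sq (Polynomial.X ^ k) hharm hhom x
  simp only [Polynomial.iterate_derivative_X_pow_eq_natCast_mul, Polynomial.eval_mul,
    Polynomial.eval_natCast, Polynomial.eval_pow, Polynomial.eval_X, ← pow_mul] at hobson
  rw [hobson]
  ring

end EuclideanSpace

theorem stmt7_general (n d k : ℕ) (P : MvPolynomial (Fin n) ℝ)
    (hharm : ∑ i : Fin n, pderiv i (pderiv i P) = 0) (hhom : P.IsHomogeneous d) :
    (d ≤ k → ∀ x : EuclideanSpace ℝ (Fin n),
      polyOp n P (fun y => ‖y‖ ^ (2 * k)) x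
        = 2 ^ d * ((k.factorial : ℝ) / ((k - d).factorial : ℝ))
            * eval (fun i => x i) P * ‖x‖ ^ (2 * (k - d)))
    ∧ (k < d → ∀ x : EuclideanSpace ℝ (Fin n),
      polyOp n P (fun y => ‖y‖ ^ (2 * k)) x = 0) := by
  refine ⟨fun hdk x => ?_, fun hkd x => ?_⟩
  · have descFactorial_eq : (k.descFactorial d : ℝ) = k.factorial / (k - d).factorial := by
      rw [eq_div_iff (by positivity), mul_comm]
      exact_mod_cast Nat.factorial_mul_descFactorial hdk
    rw [polyOp_norm_pow k hharm hhom, descFactorial_eq]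
  · rw [polyOp_norm_pow k hharm hhom, Nat.descFactorial_eq_zero_iff_lt.2 hkd]
    simp

theorem stmt7 (n j k : ℕ) (hn : 1 ≤ n) (P : MvPolynomial (Fin n) ℝ)
    (hharm : ∑ i : Fin n, MvPolynomial.pderiv i (MvPolynomial.pderiv i P) = 0)
    (hhom : P.IsHomogeneous (2 * j + 1)) :
    (2 * j + 1 ≤ k → ∀ x : EuclideanSpace ℝ (Fin n),
      polyOp n P (fun y => ‖y‖ ^ (2 * k)) x
        = 2 ^ (2 * j + 1) * ((k.factorial : ℝ) / ((k - (2 * j + 1)).factorial : ℝ))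
            * MvPolynomial.eval (fun i => x i) P * ‖x‖ ^ (2 * (k - (2 * j + 1))))
    ∧ (k < 2 * j + 1 → ∀ x : EuclideanSpace ℝ (Fin n),
      polyOp n P (fun y => ‖y‖ ^ (2 * k)) x = 0) :=
  stmt7_general n (2 * j + 1) k P hharm hhom
end

section
/- Let n ≥ 1 and let j ∈ {1, …, n}. There is a constant C > 0, depending only on n, such that for every measurable function a : ℝ^n → ℝ satisfying |a(y)| ≤ 1 for almost every y, a(y) = 0 for |y| > 1, and ∫_{ℝ^n} a(y) dy = 0, and for every x ∈ ℝ^n with |x| > 2, one has | ∫_{{y : |y| ≤ 1}} ( (x_j − y_j) / |x−y|^{n+1} ) a(y) dy | ≤ C / |x|^{n+1}. -/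
/-!
Since `a` has mean zero, the kernel value `K (x - y)` may be replaced by the increment
`K (x - y) - K x`. The kernel `K x = x j / ‖x‖ ^ (n + 1)` is homogeneous of degree `-n` and smooth
away from the origin, so this increment is `O(‖y‖ / ‖x‖ ^ (n + 1))` as long as `2 * ‖y‖ ≤ ‖x‖`:
one power of `‖x‖` is gained over the size of the kernel itself.
-/

open MeasureTheory

/-- The kernel `x ↦ L x / ‖x‖ ^ m` of a continuous linear form `L`. On `ℝⁿ`, with `L` the `j`-th
coordinate and `m = n + 1`, it is the kernel of the `j`-th Riesz transform up to a constant factor.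
It is a total function, with value `0` at the origin. -/
noncomputable def rieszKernel {E : Type*} [NormedAddCommGroup E] [NormedSpace ℝ E]
    (L : StrongDual ℝ E) (m : ℕ) (x : E) : ℝ :=
  L x / ‖x‖ ^ m

theorem abs_inv_sub_inv_le {s r : ℝ} (hr : 0 < r) (hs : r / 2 ≤ s) :
    |s⁻¹ - r⁻¹| ≤ 2 / r * |s - r| / r := by
  have hs_pos : 0 < s := (half_pos hr).trans_le hs
  calc |s⁻¹ - r⁻¹| = s⁻¹ * |s - r| / r := by
        rw [inv_sub_inv hs_pos.ne' hr.ne', abs_div, abs_sub_comm, abs_of_pos (mul_pos hs_pos hr)]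
        field_simp
    _ ≤ 2 / r * |s - r| / r := by
        gcongr
        simpa only [inv_div] using inv_anti₀ (half_pos hr) hs

theorem abs_inv_pow_sub_inv_pow_le {s r : ℝ} (hr : 0 < r) (hs : r / 2 ≤ s) (m : ℕ) :
    |(s ^ m)⁻¹ - (r ^ m)⁻¹| ≤ m * (2 / r) ^ m * |s - r| / r := by
  have hs_pos : 0 < s := (half_pos hr).trans_le hs
  have hmax : max |s⁻¹| |r⁻¹| ≤ 2 / r := by
    rw [abs_of_pos (inv_pos.2 hs_pos), abs_of_pos (inv_pos.2 hr), ← inv_div]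
    exact max_le (inv_anti₀ (half_pos hr) hs) (inv_anti₀ (half_pos hr) (half_le_self hr.le))
  rcases m with _ | m
  · simp
  calc |(s ^ (m + 1))⁻¹ - (r ^ (m + 1))⁻¹|
      ≤ |s⁻¹ - r⁻¹| * (m + 1 : ℕ) * max |s⁻¹| |r⁻¹| ^ m := by
        simpa only [inv_pow, Nat.add_sub_cancel] using abs_pow_sub_pow_le s⁻¹ r⁻¹ (m + 1)
    _ ≤ 2 / r * |s - r| / r * (m + 1 : ℕ) * (2 / r) ^ m := by
        gcongr
        exact abs_inv_sub_inv_le hr hs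
    _ = (m + 1 : ℕ) * (2 / r) ^ (m + 1) * |s - r| / r := by ring

theorem norm_integral_mul_le_of_integral_eq_zero {α 𝕜 : Type*} [RCLike 𝕜] [MeasurableSpace α]
    {μ : Measure α} {k a : α → 𝕜} {c : 𝕜} {M : ℝ} (hk : AEStronglyMeasurable k μ)
    (ha : Integrable a μ) (ha_zero : ∫ y, a y ∂μ = 0) (hkc : ∀ᵐ y ∂μ, ‖k y - c‖ ≤ M) :
    ‖∫ y, k y * a y ∂μ‖ ≤ M * ∫ y, ‖a y‖ ∂μ := by
  have hint : Integrable (fun y ↦ (k y - c) * a y) μ :=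
    ha.bdd_mul (hk.sub aestronglyMeasurable_const) hkc
  have hcancel : ∫ y, k y * a y ∂μ = ∫ y, (k y - c) * a y ∂μ :=
    calc ∫ y, k y * a y ∂μ = ∫ y, ((k y - c) * a y + c * a y) ∂μ := by
          congr with y
          ring
      _ = ∫ y, (k y - c) * a y ∂μ := by
          rw [integral_add hint (ha.const_mul c), integral_const_mul, ha_zero, mul_zero, add_zero]
  calc ‖∫ y, k y * a y ∂μ‖ ≤ ∫ y, M * ‖a y‖ ∂μ := by
        rw [hcancel]
        refine norm_integral_le_of_norm_le (ha.norm.const_mul M) ?_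
        filter_upwards [hkc] with y hy
        rw [norm_mul]
        gcongr
    _ = M * ∫ y, ‖a y‖ ∂μ := integral_const_mul _ _

section RieszKernel

variable {E : Type*} [NormedAddCommGroup E] [NormedSpace ℝ E]

theorem abs_rieszKernel_sub_sub_le (L : StrongDual ℝ E) (m : ℕ) {x y : E} (hx : x ≠ 0)
    (hxy : 2 * ‖y‖ ≤ ‖x‖) :
    |rieszKernel L m (x - y) - rieszKernel L m x| ≤ (m + 1) * 2 ^ m * ‖L‖ * ‖y‖ / ‖x‖ ^ m := by
  have hx_pos : 0 < ‖x‖ := norm_pos_iff.2 hx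
  have hhalf : ‖x‖ / 2 ≤ ‖x - y‖ := by linarith [norm_sub_norm_le x y]
  have hnorm : |‖x - y‖ - ‖x‖| ≤ ‖y‖ := by
    simpa only [sub_sub_cancel_left, norm_neg] using abs_norm_sub_norm_le (x - y) x
  have hpow : |(‖x - y‖ ^ m)⁻¹ - (‖x‖ ^ m)⁻¹| ≤ m * (2 / ‖x‖) ^ m * ‖y‖ / ‖x‖ :=
    (abs_inv_pow_sub_inv_pow_le hx_pos hhalf m).trans (by gcongr)
  have hinv : (‖x - y‖ ^ m)⁻¹ ≤ (2 / ‖x‖) ^ m := by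
    rw [← inv_div, inv_pow]
    gcongr
  calc |rieszKernel L m (x - y) - rieszKernel L m x|
      = |L x * ((‖x - y‖ ^ m)⁻¹ - (‖x‖ ^ m)⁻¹) - L y * (‖x - y‖ ^ m)⁻¹| := by
        rw [rieszKernel, rieszKernel, map_sub]
        ring_nf
    _ ≤ |L x| * |(‖x - y‖ ^ m)⁻¹ - (‖x‖ ^ m)⁻¹| + |L y| * (‖x - y‖ ^ m)⁻¹ := by
        refine (abs_sub _ _).trans_eq ?_
        rw [abs_mul, abs_mul, abs_of_nonneg (inv_nonneg.2 (pow_nonneg (norm_nonneg (x - y)) m))]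
    _ ≤ ‖L‖ * ‖x‖ * (m * (2 / ‖x‖) ^ m * ‖y‖ / ‖x‖) + ‖L‖ * ‖y‖ * (2 / ‖x‖) ^ m := by
        gcongr
        exacts [L.le_opNorm x, L.le_opNorm y]
    _ = (m + 1) * 2 ^ m * ‖L‖ * ‖y‖ / ‖x‖ ^ m := by
        rw [div_pow]
        field_simp

variable [MeasurableSpace E] [BorelSpace E]

theorem measurable_rieszKernel (L : StrongDual ℝ E) (m : ℕ) : Measurable (rieszKernel L m) :=
  L.continuous.measurable.div (continuous_norm.pow m).measurable

theorem abs_setIntegral_rieszKernel_sub_mul_le {μ : Measure E} (L : StrongDual ℝ E) (m : ℕ)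
    {ρ : ℝ} {a : E → ℝ} (ha : IntegrableOn a {y | ‖y‖ ≤ ρ} μ)
    (ha_zero : ∫ y in {y | ‖y‖ ≤ ρ}, a y ∂μ = 0) {x : E} (hx : x ≠ 0) (hxρ : 2 * ρ ≤ ‖x‖) :
    |∫ y in {y | ‖y‖ ≤ ρ}, rieszKernel L m (x - y) * a y ∂μ|
      ≤ (m + 1) * 2 ^ m * ‖L‖ * ρ / ‖x‖ ^ m * ∫ y in {y | ‖y‖ ≤ ρ}, |a y| ∂μ := by
  have hball : MeasurableSet {y : E | ‖y‖ ≤ ρ} :=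
    (isClosed_le continuous_norm continuous_const).measurableSet
  have hkernel : Measurable fun y ↦ rieszKernel L m (x - y) :=
    (measurable_rieszKernel L m).comp (continuous_sub_left x).measurable
  refine norm_integral_mul_le_of_integral_eq_zero (c := rieszKernel L m x)
    hkernel.aestronglyMeasurable ha ha_zero ?_
  filter_upwards [ae_restrict_mem hball] with y (hy : ‖y‖ ≤ ρ)
  calc |rieszKernel L m (x - y) - rieszKernel L m x|
      ≤ (m + 1) * 2 ^ m * ‖L‖ * ‖y‖ / ‖x‖ ^ m :=
        abs_rieszKernel_sub_sub_le L m hx (by linarith)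
    _ ≤ (m + 1) * 2 ^ m * ‖L‖ * ρ / ‖x‖ ^ m := by gcongr

theorem stmt11_general (μ : Measure E) (m : ℕ) {ρ : ℝ} (hρ : 0 ≤ ρ) {g : E → ℝ}
    (hg : IntegrableOn g {y | ‖y‖ ≤ ρ} μ) :
    ∃ C : ℝ, 0 < C ∧
      ∀ L : StrongDual ℝ E, ‖L‖ ≤ 1 →
        ∀ a : E → ℝ, AEMeasurable a (μ.restrict {y | ‖y‖ ≤ ρ}) →
          (∀ᵐ y ∂μ.restrict {y | ‖y‖ ≤ ρ}, |a y| ≤ g y) →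
          ∫ y in {y | ‖y‖ ≤ ρ}, a y ∂μ = 0 →
          ∀ x : E, 2 * ρ < ‖x‖ →
            |∫ y in {y | ‖y‖ ≤ ρ}, rieszKernel L m (x - y) * a y ∂μ| ≤ C / ‖x‖ ^ m := by
  set I : ℝ := ∫ y in {y | ‖y‖ ≤ ρ}, |g y| ∂μ
  have : 0 ≤ I := integral_nonneg fun _ ↦ abs_nonneg _
  refine ⟨(m + 1) * 2 ^ m * ρ * I + 1, by positivity, fun L hL a ha hag ha_zero x hx ↦ ?_⟩
  have ha_int : IntegrableOn a {y | ‖y‖ ≤ ρ} μ := hg.mono' ha.aestronglyMeasurable hag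
  have ha_le : ∫ y in {y | ‖y‖ ≤ ρ}, |a y| ∂μ ≤ I :=
    integral_mono_ae ha_int.abs hg.abs (hag.mono fun y hy ↦ hy.trans (le_abs_self (g y)))
  have hx_ne : x ≠ 0 := norm_pos_iff.1 (by linarith)
  calc |∫ y in {y | ‖y‖ ≤ ρ}, rieszKernel L m (x - y) * a y ∂μ|
      ≤ (m + 1) * 2 ^ m * ‖L‖ * ρ / ‖x‖ ^ m * ∫ y in {y | ‖y‖ ≤ ρ}, |a y| ∂μ :=
        abs_setIntegral_rieszKernel_sub_mul_le L m ha_int ha_zero hx_ne hx.le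
    _ ≤ (m + 1) * 2 ^ m * 1 * ρ / ‖x‖ ^ m * I := by gcongr
    _ = (m + 1) * 2 ^ m * ρ * I / ‖x‖ ^ m := by ring
    _ ≤ ((m + 1) * 2 ^ m * ρ * I + 1) / ‖x‖ ^ m := by
        gcongr
        exact le_add_of_nonneg_right zero_le_one

end RieszKernel

theorem norm_euclideanSpace_proj_le_one {ι 𝕜 : Type*} [Fintype ι] [RCLike 𝕜] (j : ι) :
    ‖(EuclideanSpace.proj j : StrongDual 𝕜 (EuclideanSpace 𝕜 ι))‖ ≤ 1 :=
  ContinuousLinearMap.opNorm_le_bound _ zero_le_one fun x ↦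
    (PiLp.norm_apply_le x j).trans_eq (one_mul ‖x‖).symm

theorem integrableOn_one_setOf_norm_le {E : Type*} [NormedAddCommGroup E] [ProperSpace E]
    [MeasurableSpace E] (μ : Measure E) [IsFiniteMeasureOnCompacts μ] (ρ : ℝ) :
    IntegrableOn (fun _ ↦ (1 : ℝ)) {y : E | ‖y‖ ≤ ρ} μ := by
  have hball : {y : E | ‖y‖ ≤ ρ} = Metric.closedBall 0 ρ := by
    ext y
    exact mem_closedBall_zero_iff.symm
  rw [hball]
  exact integrableOn_const measure_closedBall_lt_top.ne

theorem stmt11 (n : ℕ) (hn : 1 ≤ n) (j : Fin n) :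
    ∃ C : ℝ, 0 < C ∧
      ∀ a : EuclideanSpace ℝ (Fin n) → ℝ, Measurable a →
        (∀ᵐ y : EuclideanSpace ℝ (Fin n), |a y| ≤ 1) →
        (∀ y : EuclideanSpace ℝ (Fin n), 1 < ‖y‖ → a y = 0) →
        (∫ y : EuclideanSpace ℝ (Fin n), a y) = 0 →
        ∀ x : EuclideanSpace ℝ (Fin n), 2 < ‖x‖ →
          |∫ y in {y : EuclideanSpace ℝ (Fin n) | ‖y‖ ≤ 1},
              (x j - y j) / ‖x - y‖ ^ (n + 1) * a y|
            ≤ C / ‖x‖ ^ (n + 1) := by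
  obtain ⟨C, hC, h⟩ := stmt11_general (E := EuclideanSpace ℝ (Fin n)) volume (n + 1) zero_le_one
    (integrableOn_one_setOf_norm_le volume 1)
  exact ⟨C, hC, fun a ha ha_le ha_supp ha_zero x hx ↦
    h _ (norm_euclideanSpace_proj_le_one j) a ha.aemeasurable (ae_restrict_of_ae ha_le)
      ((setIntegral_eq_integral_of_forall_compl_eq_zero fun y hy ↦
        ha_supp y (not_le.1 hy)).trans ha_zero) x ((mul_one (2 : ℝ)).trans_lt hx)⟩
end

section
/- Let g : ℝ → ℝ be defined by g(y) = log( |y| / |y−1| ) for y ∉ {0,1} and g(0) = g(1) = 0. There exist constants m > e and c > 0 such that for every x > m, sup_{ε>0} | ∫_{{y : |y−x| > ε}} g(y) / (y−x) dy | ≥ c · (log x) / x. (For each such x and each ε > 0 the function y ↦ g(y)/(y−x) is Lebesgue integrable on {y : |y−x| > ε}.) -/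
/-!
The function `g(y) = -log (1 - 1/y)` satisfies `1/y ≤ g(y) ≤ 1/(y - 1)` off `[0, 1]`, so it decays
like `1/|y|`; being locally integrable, it can be integrated against the truncated kernel
`1/(y - x)`. Truncating at distance `ε = x` leaves the half-lines `y < 0` and `y > 2x`, on both of
which `g(y)/(y - x)` is nonnegative. Discarding the second one bounds the integral from below by
`∫_{y<0} dy / ((y - 1)(y - x)) = log x / (x - 1)`: the logarithm comes from the slow `1/y` decay of
`g` over the range `1 ≤ |y| ≤ x`.
-/

open MeasureTheory

/-- `g(y) = log(|y|/|y−1|)`; with Mathlib's conventions (`x/0 = 0`, `Real.log 0 = 0`)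
this function takes the value `0` at `y = 0` and `y = 1`. -/
noncomputable def gfun (y : ℝ) : ℝ := Real.log (|y| / |y - 1|)

open Asymptotics Filter Set Topology

theorem locallyIntegrable_of_forall_intervalIntegrable {E : Type*} [NormedAddCommGroup E]
    {f : ℝ → E} {μ : Measure ℝ} (hf : ∀ a b, IntervalIntegrable f μ a b) :
    LocallyIntegrable f μ := fun x =>
  ⟨Ioc (x - 1) (x + 1), Ioc_mem_nhds (by linarith) (by linarith), (hf _ _).1⟩

theorem integrableOn_div_sub_of_integrable_div_one_add_abs {f : ℝ → ℝ} {μ : Measure ℝ}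
    (hf : Integrable (fun y => f y / (1 + |y|)) μ) (x : ℝ) {ε : ℝ} (hε : 0 < ε) :
    IntegrableOn (fun y => f y / (y - x)) {y | ε < |y - x|} μ := by
  have hS : MeasurableSet {y : ℝ | ε < |y - x|} := measurableSet_lt (by fun_prop) (by fun_prop)
  have hweight : Measurable fun y : ℝ => (1 + |y|) / (y - x) := by fun_prop
  have hbound : ∀ y ∈ {y : ℝ | ε < |y - x|}, ‖(1 + |y|) / (y - x)‖ ≤ (1 + |x|) / ε + 1 := by
    intro y (hy : ε < |y - x|)
    have hpos : 0 < |y - x| := hε.trans hy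
    have htri : |y| ≤ |x| + |y - x| := by simpa using abs_add_le x (y - x)
    calc ‖(1 + |y|) / (y - x)‖ = (1 + |y|) / |y - x| := by
          rw [Real.norm_eq_abs, abs_div, abs_of_pos (by positivity)]
      _ ≤ (1 + |x| + |y - x|) / |y - x| := by rw [add_assoc]; gcongr
      _ = (1 + |x|) / |y - x| + 1 := by rw [add_div, div_self hpos.ne']
      _ ≤ (1 + |x|) / ε + 1 := by gcongr
  refine (hf.integrableOn.bdd_mul hweight.aestronglyMeasurable
    (ae_restrict_of_forall_mem hS hbound)).congr (Eventually.of_forall fun y => ?_)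
  have : 1 + |y| ≠ 0 := by positivity
  dsimp only
  field_simp

theorem integral_Ioi_inv_sub_mul_sub {a b c : ℝ} (hab : a ≠ b) (hac : a < c) (hbc : b < c) :
    ∫ y in Ioi c, ((y - a) * (y - b))⁻¹ = Real.log ((c - a) / (c - b)) / (b - a) := by
  have hderiv : ∀ y ∈ Ici c, HasDerivAt
      (fun y => (Real.log (y - b) - Real.log (y - a)) / (b - a)) ((y - a) * (y - b))⁻¹ y := by
    intro y (hy : c ≤ y)
    have hya : y - a ≠ 0 := by linarith
    have hyb : y - b ≠ 0 := by linarith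
    have hba : b - a ≠ 0 := sub_ne_zero.2 hab.symm
    refine (((((hasDerivAt_id' y).sub_const b).log hyb).sub
      (((hasDerivAt_id' y).sub_const a).log hya)).div_const (b - a)).congr_deriv ?_
    field_simp
    ring
  have hlim : Tendsto (fun y => (Real.log (y - b) - Real.log (y - a)) / (b - a)) atTop (𝓝 0) := by
    have := (Real.tendsto_log_comp_add_sub_log (-b)).sub (Real.tendsto_log_comp_add_sub_log (-a))
    simpa [sub_eq_add_neg] using this.div_const (b - a)
  rw [integral_Ioi_of_hasDerivAt_of_nonneg' hderiv
    (fun y (hy : c < y) => inv_nonneg.2 (mul_nonneg (by linarith) (by linarith))) hlim,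
    Real.log_div (by linarith) (by linarith)]
  ring

theorem integral_Iio_inv_sub_mul_sub {a b c : ℝ} (hab : a ≠ b) (hca : c < a) (hcb : c < b) :
    ∫ y in Iio c, ((y - a) * (y - b))⁻¹ = Real.log ((b - c) / (a - c)) / (b - a) :=
  calc ∫ y in Iio c, ((y - a) * (y - b))⁻¹
      = ∫ y in Ioi (-c), ((-y - a) * (-y - b))⁻¹ := by
        rw [← integral_Iic_eq_integral_Iio,
          integral_comp_neg_Ioi (-c) fun y => ((y - a) * (y - b))⁻¹, neg_neg]
    _ = ∫ y in Ioi (-c), ((y - -b) * (y - -a))⁻¹ := by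
        congr with y
        ring
    _ = Real.log ((b - c) / (a - c)) / (b - a) := by
        rw [integral_Ioi_inv_sub_mul_sub (neg_injective.ne hab.symm) (by linarith) (by linarith)]
        ring_nf

theorem gfun_eq_neg_log (y : ℝ) : gfun y = -Real.log (1 - y⁻¹) := by
  rcases eq_or_ne y 0 with rfl | hy
  · simp [gfun]
  · rw [gfun, ← abs_div, Real.log_abs, ← inv_div, Real.log_inv, sub_div, div_self hy, one_div]

theorem gfun_eq_log_sub_log (y : ℝ) : gfun y = Real.log y - Real.log (y - 1) := by
  rcases eq_or_ne y 0 with rfl | h0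
  · simp [gfun]
  rcases eq_or_ne y 1 with rfl | h1
  · simp [gfun]
  rw [gfun, ← abs_div, Real.log_abs, Real.log_div h0 (sub_ne_zero.2 h1)]

theorem one_sub_inv_pos_of_notMem_Icc {y : ℝ} (hy : y ∉ Icc 0 1) : 0 < 1 - y⁻¹ := by
  rcases lt_or_ge y 0 with h | h
  · linarith [inv_lt_zero.2 h]
  · exact sub_pos.2 (inv_lt_one_of_one_lt₀ (not_le.1 fun h1 => hy ⟨h, h1⟩))

theorem inv_le_gfun {y : ℝ} (hy : y ∉ Icc 0 1) : y⁻¹ ≤ gfun y := by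
  rw [gfun_eq_neg_log]
  linarith [Real.log_le_sub_one_of_pos (one_sub_inv_pos_of_notMem_Icc hy)]

theorem gfun_le_inv_sub_one {y : ℝ} (hy : y ∉ Icc 0 1) : gfun y ≤ (y - 1)⁻¹ := by
  have hpos := one_sub_inv_pos_of_notMem_Icc hy
  have hy0 : y ≠ 0 := fun h => hy (by simp [h])
  have hy1 : y - 1 ≠ 0 := sub_ne_zero.2 fun h => hy (by simp [h])
  calc gfun y ≤ (1 - y⁻¹)⁻¹ - 1 := by
        rw [gfun_eq_neg_log]
        linarith [Real.one_sub_inv_le_log_of_pos hpos]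
    _ = (y - 1)⁻¹ := by
        have := hpos.ne'
        field_simp
        ring

theorem locallyIntegrable_gfun : LocallyIntegrable gfun := by
  refine locallyIntegrable_of_forall_intervalIntegrable fun a b => ?_
  rw [funext gfun_eq_log_sub_log]
  refine intervalIntegral.intervalIntegrable_log'.sub ?_
  simpa using (intervalIntegral.intervalIntegrable_log' (a := a - 1) (b := b - 1)).comp_sub_right 1

theorem isBigO_gfun_inv : gfun =O[cocompact ℝ] fun y => y⁻¹ := by
  have hlim : Tendsto (fun y : ℝ => 1 - y⁻¹) (cocompact ℝ) (𝓝 1) := by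
    simpa [Metric.cobounded_eq_cocompact] using
      (tendsto_inv₀_cobounded (α := ℝ)).const_sub 1
  have hlog := (Real.hasDerivAt_log one_ne_zero).isBigO_sub.comp_tendsto hlim
  simpa [Function.comp_def, funext gfun_eq_neg_log] using hlog

theorem integrable_gfun_div_one_add_abs : Integrable fun y => gfun y / (1 + |y|) := by
  have hmeas : Measurable fun y => gfun y / (1 + |y|) := by
    unfold gfun
    fun_prop
  have hloc : LocallyIntegrable fun y => gfun y / (1 + |y|) :=
    locallyIntegrable_gfun.mono hmeas.aestronglyMeasurable <| Eventually.of_forall fun y => by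
      rw [norm_div, Real.norm_of_nonneg (by positivity : 0 ≤ 1 + |y|)]
      exact div_le_self (norm_nonneg _) (by linarith [abs_nonneg y])
  have hweight : (fun y : ℝ => y⁻¹ * (1 + |y|)⁻¹) =O[cocompact ℝ] fun y => (1 + y ^ 2)⁻¹ := by
    refine IsBigO.of_bound' ?_
    filter_upwards [(tendsto_norm_cocompact_atTop (E := ℝ)).eventually_ge_atTop 1] with y hy
    rw [Real.norm_eq_abs] at hy
    rw [← mul_inv, norm_inv, norm_inv, norm_mul, Real.norm_eq_abs y,
      Real.norm_of_nonneg (by positivity : 0 ≤ 1 + |y|),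
      Real.norm_of_nonneg (by positivity : 0 ≤ 1 + y ^ 2), ← sq_abs]
    exact inv_anti₀ (by positivity) (by linarith)
  exact hloc.integrable_of_isBigO_cocompact
    ((isBigO_gfun_inv.mul (isBigO_refl _ _)).trans hweight)
    (integrable_inv_one_add_sq.integrableAtFilter _)

theorem integrableOn_gfun_div_sub (x : ℝ) {ε : ℝ} (hε : 0 < ε) :
    IntegrableOn (fun y => gfun y / (y - x)) {y | ε < |y - x|} :=
  integrableOn_div_sub_of_integrable_div_one_add_abs integrable_gfun_div_one_add_abs x hε

theorem inv_sub_one_mul_sub_le_gfun_div_sub {x y : ℝ} (hy : y < 0) (hyx : y ≤ x) :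
    ((y - 1) * (y - x))⁻¹ ≤ gfun y / (y - x) := by
  rw [mul_inv, ← div_eq_mul_inv]
  exact div_le_div_of_nonpos_of_le (by linarith) (gfun_le_inv_sub_one (notMem_Icc_of_lt hy))

theorem gfun_div_sub_nonneg {x y : ℝ} (hx : 1 / 2 ≤ x) (hy : x < |y - x|) :
    0 ≤ gfun y / (y - x) := by
  rcases lt_abs.1 hy with h | h
  · have : 0 ≤ y⁻¹ := inv_nonneg.2 (by linarith)
    exact div_nonneg (this.trans (inv_le_gfun (notMem_Icc_of_gt (by linarith)))) (by linarith)
  · have : 0 ≤ ((y - 1) * (y - x))⁻¹ :=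
      inv_nonneg.2 (mul_nonneg_of_nonpos_of_nonpos (by linarith) (by linarith))
    exact this.trans (inv_sub_one_mul_sub_le_gfun_div_sub (by linarith) (by linarith))

theorem log_div_sub_one_le_setIntegral_gfun_div_sub {x : ℝ} (hx : 1 < x) :
    Real.log x / (x - 1) ≤ ∫ y in {y | x < |y - x|}, gfun y / (y - x) := by
  have hint := integrableOn_gfun_div_sub x (by linarith : 0 < x)
  have hS : MeasurableSet {y : ℝ | x < |y - x|} := measurableSet_lt (by fun_prop) (by fun_prop)
  have hsub : Iio 0 ⊆ {y : ℝ | x < |y - x|} := fun y (hy : y < 0) =>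
    show x < |y - x| from lt_abs.2 (Or.inr (by linarith))
  have hnonneg : ∀ y ∈ Iio (0 : ℝ), 0 ≤ ((y - 1) * (y - x))⁻¹ := fun y (hy : y < 0) =>
    inv_nonneg.2 (mul_nonneg_of_nonpos_of_nonpos (by linarith) (by linarith))
  calc Real.log x / (x - 1) = ∫ y in Iio 0, ((y - 1) * (y - x))⁻¹ := by
        rw [integral_Iio_inv_sub_mul_sub hx.ne one_pos (by linarith), sub_zero, sub_zero, div_one]
    _ ≤ ∫ y in Iio 0, gfun y / (y - x) :=
        integral_mono_of_nonneg (ae_restrict_of_forall_mem measurableSet_Iio hnonneg)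
          (hint.mono_set hsub) (ae_restrict_of_forall_mem measurableSet_Iio fun y hy =>
            inv_sub_one_mul_sub_le_gfun_div_sub hy (by linarith [mem_Iio.1 hy]))
    _ ≤ ∫ y in {y | x < |y - x|}, gfun y / (y - x) :=
        setIntegral_mono_set hint
          (ae_restrict_of_forall_mem hS fun y hy => gfun_div_sub_nonneg (by linarith) hy)
          hsub.eventuallyLE

theorem stmt13_general {x : ℝ} (hx : 1 < x) :
    (∀ ε : ℝ, 0 < ε →
      IntegrableOn (fun y => gfun y / (y - x)) {y : ℝ | ε < |y - x|}) ∧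
    ENNReal.ofReal (Real.log x / (x - 1))
      ≤ ⨆ (ε : ℝ) (_ : 0 < ε),
          ENNReal.ofReal |∫ y in {y : ℝ | ε < |y - x|}, gfun y / (y - x)| :=
  ⟨fun _ hε => integrableOn_gfun_div_sub x hε,
    le_iSup₂_of_le x (by linarith) (ENNReal.ofReal_le_ofReal
      ((log_div_sub_one_le_setIntegral_gfun_div_sub hx).trans (le_abs_self _)))⟩

theorem stmt13 :
    ∃ m c : ℝ, Real.exp 1 < m ∧ 0 < c ∧
      ∀ x : ℝ, m < x →
        (∀ ε : ℝ, 0 < ε →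
          IntegrableOn (fun y => gfun y / (y - x)) {y : ℝ | ε < |y - x|}) ∧
        ENNReal.ofReal (c * Real.log x / x)
          ≤ ⨆ (ε : ℝ) (_ : 0 < ε),
              ENNReal.ofReal |∫ y in {y : ℝ | ε < |y - x|}, gfun y / (y - x)| := by
  refine ⟨3, 1, Real.exp_one_lt_three, one_pos, fun x hx => ?_⟩
  have hlog : 0 ≤ Real.log x := Real.log_nonneg (by linarith)
  refine (stmt13_general (by linarith)).imp_right (ENNReal.ofReal_le_ofReal ?_).trans
  rw [one_mul]
  gcongr <;> linarith
end

section
/- There exist constants m > 1 and c > 0 such that for every x > m, ∫_{(m, ∞)} log(1 + 1/y) / (x + y) dy ≥ c · (log x) / x. -/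
open MeasureTheory

/-!
Since `1 / (1 + y) ≤ log (1 + 1 / y) ≤ 1 / y`, the integrand lies between the kernels
`1 / ((a + y) * (x + y))` with `a = 1` and `a = 0`. The upper one makes it integrable. The lower
one integrates by partial fractions to `log ((x + m) / (1 + m)) / (x - 1)`. As `(x + m) / (1 + m)`
is the mean of `x` and `1` with weights `1 / (1 + m)` and `m / (1 + m)`, concavity of the logarithm
bounds this below by `log x / ((1 + m) * x)`.
-/

open Filter Set Topology

section Kernel

variable {a b m : ℝ}

theorem hasDerivAt_log_add_div_add {y : ℝ} (hab : a ≠ b) (ha : a + y ≠ 0) (hb : b + y ≠ 0) :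
    HasDerivAt (fun y ↦ Real.log ((a + y) / (b + y)) / (b - a)) ((a + y) * (b + y))⁻¹ y := by
  have hba : b - a ≠ 0 := sub_ne_zero.2 hab.symm
  have h := ((((hasDerivAt_id' y).const_add a).div ((hasDerivAt_id' y).const_add b) hb).log
    (div_ne_zero ha hb)).div_const (b - a)
  refine h.congr_deriv ?_
  simp only [Pi.div_apply]
  field_simp
  ring

theorem tendsto_add_div_add_atTop_nhds_one (a b : ℝ) :
    Tendsto (fun y ↦ (a + y) / (b + y)) atTop (𝓝 1) := by
  have hdiv : Tendsto (fun y ↦ (a - b) / (b + y)) atTop (𝓝 0) :=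
    (tendsto_atTop_add_const_left _ b tendsto_id).const_div_atTop _
  have hone_add : Tendsto (fun y ↦ 1 + (a - b) / (b + y)) atTop (𝓝 1) := by
    simpa only [add_zero] using hdiv.const_add 1
  refine hone_add.congr' ?_
  filter_upwards [eventually_gt_atTop (-b)] with y hy
  have hby : b + y ≠ 0 := by linarith
  field_simp
  ring

theorem tendsto_log_add_div_add_atTop_nhds_zero (a b : ℝ) :
    Tendsto (fun y ↦ Real.log ((a + y) / (b + y)) / (b - a)) atTop (𝓝 0) := by
  simpa only [Real.log_one, zero_div] using
    ((tendsto_add_div_add_atTop_nhds_one a b).log one_ne_zero).div_const (b - a)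

theorem integrableOn_Ioi_inv_add_mul_add (hab : a ≠ b) (ha : 0 < a + m) (hb : 0 < b + m) :
    IntegrableOn (fun y ↦ ((a + y) * (b + y))⁻¹) (Ioi m) := by
  have ha' {y : ℝ} (hy : m ≤ y) : 0 < a + y := by linarith
  have hb' {y : ℝ} (hy : m ≤ y) : 0 < b + y := by linarith
  exact integrableOn_Ioi_deriv_of_nonneg'
    (fun y hy ↦ hasDerivAt_log_add_div_add hab (ha' hy).ne' (hb' hy).ne')
    (fun y hy ↦ (inv_pos.2 (mul_pos (ha' (le_of_lt hy)) (hb' (le_of_lt hy)))).le)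
    (tendsto_log_add_div_add_atTop_nhds_zero a b)

theorem integral_Ioi_inv_add_mul_add (hab : a ≠ b) (ha : 0 < a + m) (hb : 0 < b + m) :
    ∫ y in Ioi m, ((a + y) * (b + y))⁻¹ = Real.log ((b + m) / (a + m)) / (b - a) := by
  have hderiv (y : ℝ) (hy : y ∈ Ici m) := hasDerivAt_log_add_div_add hab
    (ha.trans_le (add_le_add_right hy a)).ne' (hb.trans_le (add_le_add_right hy b)).ne'
  rw [integral_Ioi_of_hasDerivAt_of_tendsto' hderiv (integrableOn_Ioi_inv_add_mul_add hab ha hb)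
    (tendsto_log_add_div_add_atTop_nhds_zero a b), ← inv_div (a + m), Real.log_inv]
  ring

end Kernel

section LogBounds

variable {m x y : ℝ}

theorem inv_one_add_le_log_one_add_one_div (hy : 0 < y) : (1 + y)⁻¹ ≤ Real.log (1 + 1 / y) :=
  calc (1 + y)⁻¹ = 1 - (1 + 1 / y)⁻¹ := by field_simp; ring
    _ ≤ Real.log (1 + 1 / y) := Real.one_sub_inv_le_log_of_pos (by positivity)

theorem log_one_add_one_div_le_inv (hy : 0 < y) : Real.log (1 + 1 / y) ≤ y⁻¹ :=
  calc Real.log (1 + 1 / y) ≤ 1 + 1 / y - 1 := Real.log_le_sub_one_of_pos (by positivity)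
    _ = y⁻¹ := by ring

theorem log_div_one_add_le_log_add_div_one_add (hm : 0 ≤ m) (hx : 0 < x) :
    Real.log x / (1 + m) ≤ Real.log ((x + m) / (1 + m)) := by
  have hweights : 1 / (1 + m) + m / (1 + m) = 1 := by field_simp
  have hconcave := strictConcaveOn_log_Ioi.concaveOn.2 (mem_Ioi.2 hx) (mem_Ioi.2 one_pos)
    (by positivity) (by positivity) hweights
  simp only [smul_eq_mul, Real.log_one, mul_zero, add_zero, mul_one] at hconcave
  calc Real.log x / (1 + m) = 1 / (1 + m) * Real.log x := by ring
    _ ≤ Real.log (1 / (1 + m) * x + m / (1 + m)) := hconcave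
    _ = Real.log ((x + m) / (1 + m)) := by ring_nf

end LogBounds

section Integral

variable {m x : ℝ}

theorem integrableOn_Ioi_log_one_add_one_div_div_add (hm : 0 < m) (hx : 0 < x) :
    IntegrableOn (fun y ↦ Real.log (1 + 1 / y) / (x + y)) (Ioi m) := by
  have hkernel : IntegrableOn (fun y ↦ ((0 + y) * (x + y))⁻¹) (Ioi m) :=
    integrableOn_Ioi_inv_add_mul_add hx.ne (by positivity) (by positivity)
  refine hkernel.mono' (Measurable.aestronglyMeasurable (by fun_prop)) ?_
  filter_upwards [ae_restrict_mem measurableSet_Ioi] with y hmy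
  have hy : 0 < y := hm.trans hmy
  have hlog : 0 ≤ Real.log (1 + 1 / y) :=
    Real.log_nonneg (le_add_of_nonneg_right (by positivity))
  rw [Real.norm_of_nonneg (by positivity), zero_add, mul_inv, div_eq_mul_inv]
  gcongr
  exact log_one_add_one_div_le_inv hy

theorem log_add_div_one_add_div_le_integral_Ioi (hm : 0 < m) (hx : 0 < x) (hx₁ : x ≠ 1) :
    Real.log ((x + m) / (1 + m)) / (x - 1) ≤
      ∫ y in Ioi m, Real.log (1 + 1 / y) / (x + y) := by
  have h₁ : 0 < 1 + m := by positivity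
  have hxm : 0 < x + m := by positivity
  rw [← integral_Ioi_inv_add_mul_add hx₁.symm h₁ hxm]
  refine setIntegral_mono_on (integrableOn_Ioi_inv_add_mul_add hx₁.symm h₁ hxm)
    (integrableOn_Ioi_log_one_add_one_div_div_add hm hx) measurableSet_Ioi fun y hmy ↦ ?_
  have hy : 0 < y := hm.trans hmy
  rw [mul_inv, div_eq_mul_inv]
  gcongr
  exact inv_one_add_le_log_one_add_one_div hy

theorem stmt15_general (hm : 0 < m) (hx : 1 < x) :
    (1 + m)⁻¹ * Real.log x / x ≤ ∫ y in Ioi m, Real.log (1 + 1 / y) / (x + y) := by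
  have hx₀ : 0 < x := one_pos.trans hx
  have hsub : 0 < x - 1 := sub_pos.2 hx
  have hlog : 0 ≤ Real.log x / (1 + m) := div_nonneg (Real.log_nonneg hx.le) (by positivity)
  calc (1 + m)⁻¹ * Real.log x / x
      = Real.log x / (1 + m) / x := by rw [inv_mul_eq_div]
    _ ≤ Real.log x / (1 + m) / (x - 1) :=
        div_le_div_of_nonneg_left hlog hsub (sub_le_self x zero_le_one)
    _ ≤ Real.log ((x + m) / (1 + m)) / (x - 1) :=
        div_le_div_of_nonneg_right (log_div_one_add_le_log_add_div_one_add hm.le hx₀) hsub.le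
    _ ≤ ∫ y in Ioi m, Real.log (1 + 1 / y) / (x + y) :=
        log_add_div_one_add_div_le_integral_Ioi hm hx₀ hx.ne'

end Integral

theorem stmt15 :
    ∃ m c : ℝ, 1 < m ∧ 0 < c ∧
      ∀ x : ℝ, m < x →
        c * Real.log x / x ≤ ∫ y in Set.Ioi m, Real.log (1 + 1 / y) / (x + y) :=
  ⟨2, (1 + 2)⁻¹, by norm_num, by norm_num,
    fun _ hx ↦ stmt15_general two_pos (one_lt_two.trans hx)⟩
end

section
/- There exists a constant m > 1 such that for every x > m, 0 ≤ ∫_{(2x+m, ∞)} log( y / (y−1) ) / (y − x) dy ≤ 2 / x. -/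
open MeasureTheory

/-!
Since `log t ≤ t - 1`, the numerator `log (y / (y - 1))` is at most `1 / (y - 1)`. Beyond the
rightmost pole `p = max 1 x` both `y - 1` and `y - x` are at least `y - p`, so the integrand is
dominated by `1 / (y - p) ^ 2`, whose integral over `(a, ∞)` is `1 / (a - p)`. For `a = 2 * x + m`
with `1 ≤ m` and `0 < x` we have `x ≤ a - p`.
-/

section InverseSquare

variable {a c : ℝ}

theorem hasDerivAt_neg_inv_sub {y : ℝ} (h : y ≠ c) :
    HasDerivAt (fun z : ℝ => -(z - c)⁻¹) ((y - c) ^ 2)⁻¹ y :=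
  (((hasDerivAt_id' y).sub_const c).fun_inv (sub_ne_zero.2 h)).fun_neg.congr_deriv
    (by simp [neg_div])

theorem tendsto_neg_inv_sub_atTop (c : ℝ) :
    Filter.Tendsto (fun z : ℝ => -(z - c)⁻¹) Filter.atTop (nhds 0) := by
  simpa only [neg_zero, Function.comp_def, sub_eq_add_neg, id_eq] using
    (tendsto_inv_atTop_zero.comp
      (Filter.tendsto_atTop_add_const_right Filter.atTop (-c) Filter.tendsto_id)).neg

theorem integrableOn_Ioi_inv_sub_sq (h : c < a) :
    IntegrableOn (fun y : ℝ => ((y - c) ^ 2)⁻¹) (Set.Ioi a) :=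
  integrableOn_Ioi_deriv_of_nonneg'
    (fun _ hy => hasDerivAt_neg_inv_sub (h.trans_le hy).ne')
    (fun _ _ => by positivity) (tendsto_neg_inv_sub_atTop c)

theorem integral_Ioi_inv_sub_sq (h : c < a) :
    ∫ y in Set.Ioi a, ((y - c) ^ 2)⁻¹ = (a - c)⁻¹ := by
  rw [integral_Ioi_of_hasDerivAt_of_nonneg'
    (fun _ hy => hasDerivAt_neg_inv_sub (h.trans_le hy).ne')
    (fun _ _ => by positivity) (tendsto_neg_inv_sub_atTop c), zero_sub, neg_neg]

end InverseSquare

section LogQuotient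

variable {a b x y : ℝ}

theorem log_div_sub_nonneg (hb : 0 ≤ b) (hy : b < y) : 0 ≤ Real.log (y / (y - b)) :=
  Real.log_nonneg ((one_le_div (sub_pos.2 hy)).2 (sub_le_self y hb))

theorem log_div_sub_le (hy₀ : 0 < y) (hy : b < y) : Real.log (y / (y - b)) ≤ b / (y - b) := by
  have hyb : 0 < y - b := sub_pos.2 hy
  calc Real.log (y / (y - b)) ≤ y / (y - b) - 1 := Real.log_le_sub_one_of_pos (div_pos hy₀ hyb)
    _ = b / (y - b) := by rw [div_sub_one hyb.ne', sub_sub_cancel]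

theorem log_div_sub_div_sub_nonneg (hb : 0 ≤ b) (hy : max b x < y) :
    0 ≤ Real.log (y / (y - b)) / (y - x) :=
  div_nonneg (log_div_sub_nonneg hb (max_lt_iff.1 hy).1) (sub_nonneg.2 (max_lt_iff.1 hy).2.le)

theorem log_div_sub_div_sub_le (hb : 0 ≤ b) (hy : max b x < y) :
    Real.log (y / (y - b)) / (y - x) ≤ b * ((y - max b x) ^ 2)⁻¹ := by
  obtain ⟨hby, hxy⟩ := max_lt_iff.1 hy
  have hp : 0 < y - max b x := sub_pos.2 hy
  calc Real.log (y / (y - b)) / (y - x)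
      ≤ b / (y - b) / (y - x) :=
        div_le_div_of_nonneg_right (log_div_sub_le (hb.trans_lt hby) hby) (sub_nonneg.2 hxy.le)
    _ ≤ b / (y - max b x) / (y - max b x) :=
        div_le_div₀ (div_nonneg hb hp.le)
          (div_le_div_of_nonneg_left hb hp (sub_le_sub_left (le_max_left b x) y))
          hp (sub_le_sub_left (le_max_right b x) y)
    _ = b * ((y - max b x) ^ 2)⁻¹ := by rw [div_div, ← sq, div_eq_mul_inv]

theorem integrableOn_Ioi_log_div_sub_div_sub (hb : 0 ≤ b) (ha : max b x < a) :
    IntegrableOn (fun y : ℝ => Real.log (y / (y - b)) / (y - x)) (Set.Ioi a) := by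
  refine ((integrableOn_Ioi_inv_sub_sq ha).const_mul b).mono'
    (Measurable.aestronglyMeasurable (by fun_prop)) ?_
  filter_upwards [ae_restrict_mem measurableSet_Ioi] with y hy
  rw [Real.norm_of_nonneg (log_div_sub_div_sub_nonneg hb (ha.trans hy))]
  exact log_div_sub_div_sub_le hb (ha.trans hy)

theorem integral_Ioi_log_div_sub_div_sub_nonneg (hb : 0 ≤ b) (ha : max b x ≤ a) :
    0 ≤ ∫ y in Set.Ioi a, Real.log (y / (y - b)) / (y - x) :=
  setIntegral_nonneg measurableSet_Ioi fun _ hy =>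
    log_div_sub_div_sub_nonneg hb (ha.trans_lt hy)

theorem integral_Ioi_log_div_sub_div_sub_le (hb : 0 ≤ b) (ha : max b x < a) :
    ∫ y in Set.Ioi a, Real.log (y / (y - b)) / (y - x) ≤ b / (a - max b x) :=
  calc ∫ y in Set.Ioi a, Real.log (y / (y - b)) / (y - x)
      ≤ ∫ y in Set.Ioi a, b * ((y - max b x) ^ 2)⁻¹ :=
        setIntegral_mono_on (integrableOn_Ioi_log_div_sub_div_sub hb ha)
          ((integrableOn_Ioi_inv_sub_sq ha).const_mul b) measurableSet_Ioi
          fun _ hy => log_div_sub_div_sub_le hb (ha.trans hy)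
    _ = b / (a - max b x) := by
        rw [integral_const_mul, integral_Ioi_inv_sub_sq ha, div_eq_mul_inv]

end LogQuotient

theorem stmt16_general {m x : ℝ} (hm : 1 ≤ m) (hx : 0 < x) :
    IntegrableOn (fun y : ℝ => Real.log (y / (y - 1)) / (y - x)) (Set.Ioi (2 * x + m)) ∧
      0 ≤ (∫ y in Set.Ioi (2 * x + m), Real.log (y / (y - 1)) / (y - x)) ∧
      (∫ y in Set.Ioi (2 * x + m), Real.log (y / (y - 1)) / (y - x)) ≤ 1 / x := by
  have hgap : x ≤ 2 * x + m - max 1 x :=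
    le_sub_comm.1 (max_le (by linarith) (by linarith))
  have hpole : max 1 x < 2 * x + m := sub_pos.1 (hx.trans_le hgap)
  exact ⟨integrableOn_Ioi_log_div_sub_div_sub zero_le_one hpole,
    integral_Ioi_log_div_sub_div_sub_nonneg zero_le_one hpole.le,
    (integral_Ioi_log_div_sub_div_sub_le zero_le_one hpole).trans
      (one_div_le_one_div_of_le hx hgap)⟩

theorem stmt16 :
    ∃ m : ℝ, 1 < m ∧
      ∀ x : ℝ, m < x →
        0 ≤ (∫ y in Set.Ioi (2 * x + m), Real.log (y / (y - 1)) / (y - x)) ∧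
        (∫ y in Set.Ioi (2 * x + m), Real.log (y / (y - 1)) / (y - x)) ≤ 2 / x := by
  refine ⟨2, one_lt_two, fun x hx => ?_⟩
  have hx₀ : 0 < x := two_pos.trans hx
  obtain ⟨-, h_nonneg, h_le⟩ := stmt16_general one_le_two hx₀
  exact ⟨h_nonneg, h_le.trans (by gcongr; exact one_le_two)⟩
end
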